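/- arXiv:2503.06224 — 10 statements merged into one kernel-verified Lean document; each statement's English description precedes it below -/
import Mathlib

section
/- Let T > 0 be a real number. The conjugation orbit of T·A under GL₂(ℝ), i.e. the set {g (T·A) g⁻¹ : g an invertible 2×2 real matrix}, is equal to the one-sheeted hyperboloid {a·A + b·B + c·C : a, b, c ∈ ℝ, a² + b² − c² = T²} inside M₂(ℝ). -/
noncomputable def matA : Matrix (Fin 2) (Fin 2) ℝ := !![1, 0; 0, -1]
noncomputable def matB : Matrix (Fin 2) (Fin 2) ℝ := !![0, 1; 1, 0]
noncomputable def matC : Matrix (Fin 2) (Fin 2) ℝ := !![0, -1; 1, 0]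

/-!
An `n × n` matrix whose characteristic polynomial vanishes at `n` distinct scalars is conjugate to
the diagonal matrix of these scalars. For `2 × 2` matrices the characteristic polynomial is given by
trace and determinant, so the conjugates of `diag(T, -T)` are the matrices with trace `0` and
determinant `-T ^ 2`. The trace-zero matrices are the span of `A`, `B`, `C`, on which the
determinant is the quadratic form `-(a ^ 2 + b ^ 2 - c ^ 2)`.
-/

section

open Matrix Polynomial

variable {K : Type*} [Field K]

theorem exists_units_eq_conj_diagonal_of_isRoot_charpoly {n : Type*} [Fintype n] [DecidableEq n]
    {X : Matrix n n K} {d : n → K} (hd : Function.Injective d)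
    (hroot : ∀ i, X.charpoly.IsRoot (d i)) :
    ∃ g : (Matrix n n K)ˣ, X = g * diagonal d * (g⁻¹ : (Matrix n n K)ˣ) := by
  have heigen (i : n) : Module.End.HasEigenvalue (toLin' X) (d i) := by
    rw [Module.End.hasEigenvalue_iff_isRoot_charpoly, Matrix.charpoly_toLin']
    exact hroot i
  choose v hv using fun i ↦ (heigen i).exists_hasEigenvector
  have hindep : LinearIndependent K v :=
    Module.End.eigenvectors_linearIndependent' (toLin' X) d hd v hv
  obtain ⟨g, hg⟩ : IsUnit (of v)ᵀ := linearIndependent_cols_iff_isUnit.mp hindep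
  refine ⟨g, (Units.eq_mul_inv_iff_mul_eq g).mpr ?_⟩
  ext i j
  rw [hg, mul_diagonal]
  simpa [mulVec, dotProduct, mul_apply, mul_comm] using congrFun (hv j).apply_eq_smul i

theorem exists_units_eq_conj_diagonal_iff_trace_det {X : Matrix (Fin 2) (Fin 2) K} {l m : K}
    (hlm : l ≠ m) :
    (∃ g : (Matrix (Fin 2) (Fin 2) K)ˣ,
        X = g * diagonal ![l, m] * (g⁻¹ : (Matrix (Fin 2) (Fin 2) K)ˣ)) ↔
      X.trace = l + m ∧ X.det = l * m := by
  constructor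
  · rintro ⟨g, rfl⟩
    rw [trace_units_conj, det_units_conj]
    simp
  · rintro ⟨htrace, hdet⟩
    apply exists_units_eq_conj_diagonal_of_isRoot_charpoly
    · simpa [Function.Injective, Fin.forall_fin_two, eq_comm] using hlm
    · have hcharpoly : X.charpoly = (Polynomial.X - C l) * (Polynomial.X - C m) := by
        rw [charpoly_fin_two, htrace, hdet, C_add, C_mul]
        ring
      simp [hcharpoly, Fin.forall_fin_two]

theorem smul_add_smul_add_smul_eq_of_fin_two {R : Type*} [CommRing R] (a b c : R) :
    a • !![1, 0; 0, -1] + b • !![0, 1; 1, 0] + c • !![0, -1; 1, 0] = !![a, b - c; b + c, -a] := by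
  ext i j
  fin_cases i <;> fin_cases j <;> simp [sub_eq_add_neg]

theorem exists_hyperboloid_coords_iff_trace_det {R : Type*} [CommRing R] (h2 : IsUnit (2 : R))
    {X : Matrix (Fin 2) (Fin 2) R} {q : R} :
    (∃ a b c : R, a ^ 2 + b ^ 2 - c ^ 2 = q ∧
        X = a • !![1, 0; 0, -1] + b • !![0, 1; 1, 0] + c • !![0, -1; 1, 0]) ↔
      X.trace = 0 ∧ X.det = -q := by
  simp only [smul_add_smul_add_smul_eq_of_fin_two]
  constructor
  · rintro ⟨a, b, c, rfl, rfl⟩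
    rw [trace_fin_two_of, det_fin_two_of]
    exact ⟨add_neg_cancel a, by ring⟩
  · rintro ⟨htrace, hdet⟩
    obtain ⟨half, hhalf⟩ := h2.exists_right_inv
    obtain ⟨x, y, z, w, rfl⟩ : ∃ x y z w, X = !![x, y; z, w] := ⟨_, _, _, _, eta_fin_two X⟩
    rw [trace_fin_two_of] at htrace
    rw [det_fin_two_of] at hdet
    obtain rfl : w = -x := by linear_combination htrace
    have hsub : half * (y + z) - half * (z - y) = y := by linear_combination y * hhalf
    have hadd : half * (y + z) + half * (z - y) = z := by linear_combination z * hhalf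
    refine ⟨x, half * (y + z), half * (z - y), ?_, by rw [hsub, hadd]⟩
    calc x ^ 2 + (half * (y + z)) ^ 2 - (half * (z - y)) ^ 2
        = x ^ 2 + (half * (y + z) - half * (z - y)) * (half * (y + z) + half * (z - y)) := by ring
      _ = x ^ 2 + y * z := by rw [hsub, hadd]
      _ = q := by linear_combination -hdet

theorem stmt_0_general [NeZero (2 : K)] {T : K} (hT : T ≠ 0) :
    {X : Matrix (Fin 2) (Fin 2) K | ∃ g : (Matrix (Fin 2) (Fin 2) K)ˣ,
        X = g * (T • (!![1, 0; 0, -1] : Matrix (Fin 2) (Fin 2) K)) *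
          (g⁻¹ : (Matrix (Fin 2) (Fin 2) K)ˣ)} =
    {X : Matrix (Fin 2) (Fin 2) K | ∃ a b c : K, a ^ 2 + b ^ 2 - c ^ 2 = T ^ 2 ∧
        X = a • !![1, 0; 0, -1] + b • !![0, 1; 1, 0] + c • !![0, -1; 1, 0]} := by
  have hdiag : T • !![1, 0; 0, -1] = diagonal ![T, -T] := by simp [diagonal_fin_two]
  have h2 : (2 : K) ≠ 0 := two_ne_zero
  have hne : T ≠ -T := by
    rw [Ne, eq_neg_iff_add_eq_zero, ← two_mul]
    exact mul_ne_zero h2 hT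
  ext X
  rw [Set.mem_ofPred_eq, Set.mem_ofPred_eq, hdiag,
    exists_units_eq_conj_diagonal_iff_trace_det hne,
    exists_hyperboloid_coords_iff_trace_det h2.isUnit, add_neg_cancel, mul_neg, ← sq]

end

/-- The conjugation orbit of `T • A` under `GL₂(ℝ)` equals the one-sheeted hyperboloid
`{a•A + b•B + c•C : a² + b² − c² = T²}`. -/
theorem stmt_0 (T : ℝ) (hT : 0 < T) :
    {X : Matrix (Fin 2) (Fin 2) ℝ | ∃ g : (Matrix (Fin 2) (Fin 2) ℝ)ˣ,
        X = (g : Matrix (Fin 2) (Fin 2) ℝ) * (T • matA) *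
          ((g⁻¹ : (Matrix (Fin 2) (Fin 2) ℝ)ˣ) : Matrix (Fin 2) (Fin 2) ℝ)} =
    {X : Matrix (Fin 2) (Fin 2) ℝ | ∃ a b c : ℝ,
        a ^ 2 + b ^ 2 - c ^ 2 = T ^ 2 ∧ X = a • matA + b • matB + c • matC} :=
  stmt_0_general hT.ne'
end

section
/- Let E be a complex inner product space and let A, B, C : E → E be linear maps such that ⟨Bx, y⟩ = −⟨x, By⟩ and ⟨Cx, y⟩ = −⟨x, Cy⟩ for all x, y ∈ E, and such that B∘C − C∘B = 2·A. Let T, R be real numbers and let v ∈ E with ‖v‖ = 1 and ‖A v − (2iT)·v‖ ≤ R. Then ‖Bv‖ · ‖Cv‖ ≥ 2T − R. -/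
open scoped InnerProductSpace

/-!
The Heisenberg–Robertson uncertainty argument applies. Since `B` and `C` are skew-adjoint, the
expectation `⟪v, [B, C] v⟫` equals `⟪C v, B v⟫ - ⟪B v, C v⟫`, which Cauchy–Schwarz bounds by
`2 ‖B v‖ ‖C v‖`; thus `‖⟪v, A v⟫‖ ≤ ‖B v‖ ‖C v‖`. Conversely, if `A v` is close to `z • v`, then
`⟪v, A v⟫` is close to `z ‖v‖ ^ 2`.
-/

section UncertaintyPrinciple

variable {𝕜 E : Type*} [RCLike 𝕜] [SeminormedAddCommGroup E] [InnerProductSpace 𝕜 E]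

lemma inner_commutator_apply_of_skewAdjoint {B C : E →ₗ[𝕜] E}
    (hB : ∀ x y : E, ⟪B x, y⟫_𝕜 = -⟪x, B y⟫_𝕜)
    (hC : ∀ x y : E, ⟪C x, y⟫_𝕜 = -⟪x, C y⟫_𝕜) (x y : E) :
    ⟪x, (B ∘ₗ C - C ∘ₗ B) y⟫_𝕜 = ⟪C x, B y⟫_𝕜 - ⟪B x, C y⟫_𝕜 := by
  rw [LinearMap.sub_apply, LinearMap.comp_apply, LinearMap.comp_apply, inner_sub_right,
    hB x (C y), hC x (B y)]
  ring

lemma norm_inner_commutator_apply_le_of_skewAdjoint {B C : E →ₗ[𝕜] E}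
    (hB : ∀ x y : E, ⟪B x, y⟫_𝕜 = -⟪x, B y⟫_𝕜)
    (hC : ∀ x y : E, ⟪C x, y⟫_𝕜 = -⟪x, C y⟫_𝕜) (v : E) :
    ‖⟪v, (B ∘ₗ C - C ∘ₗ B) v⟫_𝕜‖ ≤ 2 * (‖B v‖ * ‖C v‖) :=
  calc
    ‖⟪v, (B ∘ₗ C - C ∘ₗ B) v⟫_𝕜‖ = ‖⟪C v, B v⟫_𝕜 - ⟪B v, C v⟫_𝕜‖ := by
      rw [inner_commutator_apply_of_skewAdjoint hB hC]
    _ ≤ ‖⟪C v, B v⟫_𝕜‖ + ‖⟪B v, C v⟫_𝕜‖ := norm_sub_le _ _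
    _ ≤ ‖C v‖ * ‖B v‖ + ‖B v‖ * ‖C v‖ :=
      add_le_add (norm_inner_le_norm _ _) (norm_inner_le_norm _ _)
    _ = 2 * (‖B v‖ * ‖C v‖) := by ring

lemma norm_mul_sub_norm_sub_smul_le_norm_inner (v w : E) (z : 𝕜) :
    ‖v‖ * (‖z‖ * ‖v‖ - ‖w - z • v‖) ≤ ‖⟪v, w⟫_𝕜‖ := by
  have norm_inner_smul_self : ‖⟪v, z • v⟫_𝕜‖ = ‖z‖ * ‖v‖ ^ 2 := by
    rw [inner_smul_right, norm_mul, ← inner_self_re_eq_norm, inner_self_eq_norm_sq]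
  have norm_inner_error : ‖⟪v, w⟫_𝕜 - ⟪v, z • v⟫_𝕜‖ ≤ ‖v‖ * ‖w - z • v‖ := by
    rw [← inner_sub_right]
    exact norm_inner_le_norm _ _
  calc
    ‖v‖ * (‖z‖ * ‖v‖ - ‖w - z • v‖) = ‖⟪v, z • v⟫_𝕜‖ - ‖v‖ * ‖w - z • v‖ := by
      rw [norm_inner_smul_self]
      ring
    _ ≤ ‖⟪v, z • v⟫_𝕜‖ - ‖⟪v, w⟫_𝕜 - ⟪v, z • v⟫_𝕜‖ := by gcongr
    _ ≤ ‖⟪v, w⟫_𝕜‖ := by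
      rw [sub_le_iff_le_add, norm_sub_rev]
      exact norm_le_norm_add_norm_sub' _ _

theorem stmt_2_general {A B C : E →ₗ[𝕜] E}
    (hB : ∀ x y : E, ⟪B x, y⟫_𝕜 = -⟪x, B y⟫_𝕜)
    (hC : ∀ x y : E, ⟪C x, y⟫_𝕜 = -⟪x, C y⟫_𝕜)
    (hBC : B ∘ₗ C - C ∘ₗ B = (2 : 𝕜) • A)
    {z : 𝕜} {R : ℝ} {v : E} (hA : ‖A v - z • v‖ ≤ R) :
    ‖v‖ * (‖z‖ * ‖v‖ - R) ≤ ‖B v‖ * ‖C v‖ := by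
  have norm_inner_le : ‖⟪v, A v⟫_𝕜‖ ≤ ‖B v‖ * ‖C v‖ := by
    have h := norm_inner_commutator_apply_le_of_skewAdjoint hB hC v
    rw [hBC, LinearMap.smul_apply, inner_smul_right, norm_mul, RCLike.norm_ofNat] at h
    exact le_of_mul_le_mul_left h two_pos
  calc
    ‖v‖ * (‖z‖ * ‖v‖ - R) ≤ ‖v‖ * (‖z‖ * ‖v‖ - ‖A v - z • v‖) := by gcongr
    _ ≤ ‖⟪v, A v⟫_𝕜‖ := norm_mul_sub_norm_sub_smul_le_norm_inner v (A v) z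
    _ ≤ ‖B v‖ * ‖C v‖ := norm_inner_le

end UncertaintyPrinciple

theorem stmt_2 {E : Type*} [NormedAddCommGroup E] [InnerProductSpace ℂ E]
    (A B C : E →ₗ[ℂ] E)
    (hB : ∀ x y : E, ⟪B x, y⟫_ℂ = -⟪x, B y⟫_ℂ)
    (hC : ∀ x y : E, ⟪C x, y⟫_ℂ = -⟪x, C y⟫_ℂ)
    (hBC : B ∘ₗ C - C ∘ₗ B = (2 : ℂ) • A)
    (T R : ℝ) (v : E) (hv : ‖v‖ = 1)
    (hA : ‖A v - (2 * Complex.I * (T : ℂ)) • v‖ ≤ R) :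
    2 * T - R ≤ ‖B v‖ * ‖C v‖ := by
  have h : 2 * |T| - R ≤ ‖B v‖ * ‖C v‖ := by simpa [hv] using stmt_2_general hB hC hBC hA
  linarith [le_abs_self T]
end

section
/- Let E be a complex inner product space, let T ≥ 1 be real, and set N = ⌊√T⌋. Let (v_n) for integers n with −N ≤ n ≤ N+1 be an orthonormal family in E, and let R, C : E → E be linear maps such that R v_n = (iT + 1/2 + n)·v_{n+1} and C v_n = (2in)·v_n for all n with −N ≤ n ≤ N. Set ψ = Σ_{n=−N}^{N} v_n. Then: (i) ‖ψ‖² = 2N + 1; (ii) ‖Cψ‖ ≤ 2N·‖ψ‖; and (iii) ‖Rψ − (iT)·ψ‖ ≤ 4T. -/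
open scoped InnerProductSpace

/-!
On `ψ = ∑ v n`, the weighted shift `R v n = (z + c n) • v (n + 1)` differs from multiplication by
`z` in two ways: the telescoping sum `z • ∑ (v (n + 1) - v n)` leaves only the two boundary vectors,
of total norm at most `2 ‖z‖`, and the perturbation `∑ c n • v (n + 1)` has norm `√(∑ ‖c n‖ ^ 2)`
by Pythagoras. For `c n = n + 1 / 2` and `|n| ≤ N` the latter is of order `N ^ (3 / 2)`, which
`1 ≤ ‖z‖` and `N ^ 2 ≤ ‖z‖` make at most `2 ‖z‖`.
-/

theorem sum_Icc_int_sub {M : Type*} [AddCommGroup M] (f : ℤ → M) {a b : ℤ} (hab : a ≤ b) :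
    ∑ n ∈ Finset.Icc a b, (f (n + 1) - f n) = f (b + 1) - f a := by
  induction b, hab using Int.leInduction with
  | base => simp
  | succ b hab ih =>
    rw [← Finset.insert_Icc_right_eq_Icc_add_one (by lia), Finset.sum_insert (by simp), ih]
    abel

theorem sum_Icc_int_add_half_sq {a b : ℤ} (hab : a ≤ b) :
    ∑ n ∈ Finset.Icc a b, ((n : ℝ) + 1 / 2) ^ 2 =
      (((b : ℝ) + 1) ^ 3 / 3 - ((b : ℝ) + 1) / 12) - ((a : ℝ) ^ 3 / 3 - (a : ℝ) / 12) := by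
  have telescope := sum_Icc_int_sub (fun n : ℤ ↦ (n : ℝ) ^ 3 / 3 - (n : ℝ) / 12) hab
  push_cast at telescope
  rw [← telescope]
  exact Finset.sum_congr rfl fun n _ ↦ by ring

theorem sum_Icc_neg_add_half_sq_le {N : ℕ} {T : ℝ} (hT : 1 ≤ T) (hNT : (N : ℝ) ^ 2 ≤ T) :
    ∑ n ∈ Finset.Icc (-(N : ℤ)) N, ((n : ℝ) + 1 / 2) ^ 2 ≤ (2 * T) ^ 2 := by
  have hN_le_T : (N : ℝ) ≤ T := le_trans (mod_cast Nat.le_self_pow two_ne_zero N) hNT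
  have hT_le_sq : T ≤ T ^ 2 := le_self_pow₀ hT two_ne_zero
  have hcube : (N : ℝ) ^ 3 ≤ T ^ 2 := calc
    (N : ℝ) ^ 3 = (N : ℝ) ^ 2 * N := pow_succ _ _
    _ ≤ T * T := by gcongr
    _ = T ^ 2 := (sq T).symm
  calc ∑ n ∈ Finset.Icc (-(N : ℤ)) N, ((n : ℝ) + 1 / 2) ^ 2
      = (8 * (N : ℝ) ^ 3 + 12 * (N : ℝ) ^ 2 + 10 * N + 3) / 12 := by
        rw [sum_Icc_int_add_half_sq (by lia)]
        push_cast
        ring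
    _ ≤ (2 * T) ^ 2 := by linarith

theorem map_sum_sub_smul_sum_of_shift {𝕜 E : Type*} [Ring 𝕜] [AddCommGroup E] [Module 𝕜 E]
    {v : ℤ → E} {R : E →ₗ[𝕜] E} {z : 𝕜} {c : ℤ → 𝕜} {a b : ℤ} (hab : a ≤ b)
    (hR : ∀ n ∈ Finset.Icc a b, R (v n) = (z + c n) • v (n + 1)) :
    R (∑ n ∈ Finset.Icc a b, v n) - z • ∑ n ∈ Finset.Icc a b, v n =
      z • (v (b + 1) - v a) + ∑ n ∈ Finset.Icc a b, c n • v (n + 1) := by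
  rw [← sum_Icc_int_sub v hab, map_sum, Finset.sum_congr rfl hR, Finset.smul_sum, Finset.smul_sum,
    ← Finset.sum_sub_distrib, ← Finset.sum_add_distrib]
  refine Finset.sum_congr rfl fun n _ ↦ ?_
  rw [add_smul, smul_sub]
  abel

section Orthonormal

variable {𝕜 E ι κ : Type*} [RCLike 𝕜] [NormedAddCommGroup E] [InnerProductSpace 𝕜 E]

theorem orthonormal_restrict_comp {v : ι → E} {s : Finset ι} {t : Finset κ} {f : κ → ι}
    (hv : Orthonormal 𝕜 (s.restrict v)) (hmaps : Set.MapsTo f t s) (hinj : Set.InjOn f t) :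
    Orthonormal 𝕜 (t.restrict fun k ↦ v (f k)) :=
  hv.comp (hmaps.restrict f t s) (hmaps.restrict_inj.2 hinj)

theorem norm_sum_smul_sq_of_orthonormal_restrict {v : ι → E} {s : Finset ι}
    (hv : Orthonormal 𝕜 (s.restrict v)) (c : ι → 𝕜) :
    ‖∑ i ∈ s, c i • v i‖ ^ 2 = ∑ i ∈ s, ‖c i‖ ^ 2 := by
  rw [← Finset.sum_coe_sort s, ← Finset.sum_coe_sort s]
  exact hv.orthogonalFamily.norm_sum (fun i ↦ c i) Finset.univ

theorem norm_sum_sq_of_orthonormal_restrict {v : ι → E} {s : Finset ι}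
    (hv : Orthonormal 𝕜 (s.restrict v)) : ‖∑ i ∈ s, v i‖ ^ 2 = s.card := by
  simpa using norm_sum_smul_sq_of_orthonormal_restrict hv fun _ ↦ 1

theorem norm_map_sum_le_of_diagonal {v : ι → E} {s : Finset ι}
    (hv : Orthonormal 𝕜 (s.restrict v)) {C : E →ₗ[𝕜] E} {c : ι → 𝕜} {B : ℝ}
    (hC : ∀ i ∈ s, C (v i) = c i • v i) (hc : ∀ i ∈ s, ‖c i‖ ≤ B) :
    ‖C (∑ i ∈ s, v i)‖ ≤ B * ‖∑ i ∈ s, v i‖ := by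
  obtain rfl | ⟨i, hi⟩ := s.eq_empty_or_nonempty
  · simp
  have hB : 0 ≤ B := (norm_nonneg _).trans (hc i hi)
  refine le_of_sq_le_sq ?_ (by positivity)
  calc ‖C (∑ i ∈ s, v i)‖ ^ 2
      = ∑ i ∈ s, ‖c i‖ ^ 2 := by
        rw [map_sum, Finset.sum_congr rfl hC, norm_sum_smul_sq_of_orthonormal_restrict hv]
    _ ≤ ∑ _i ∈ s, B ^ 2 := by
        gcongr with i hi
        exact hc i hi
    _ = (B * ‖∑ i ∈ s, v i‖) ^ 2 := by
        rw [mul_pow, norm_sum_sq_of_orthonormal_restrict hv, Finset.sum_const, nsmul_eq_mul,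
          mul_comm]

theorem norm_map_sum_sub_smul_sum_le_of_shift {v : ℤ → E} {a b : ℤ} (hab : a ≤ b)
    (hv : Orthonormal 𝕜 ((Finset.Icc a (b + 1)).restrict v)) {R : E →ₗ[𝕜] E} {z : 𝕜} {c : ℤ → 𝕜}
    (hR : ∀ n ∈ Finset.Icc a b, R (v n) = (z + c n) • v (n + 1)) :
    ‖R (∑ n ∈ Finset.Icc a b, v n) - z • ∑ n ∈ Finset.Icc a b, v n‖ ≤
      2 * ‖z‖ + √(∑ n ∈ Finset.Icc a b, ‖c n‖ ^ 2) := by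
  have norm_first : ‖v a‖ = 1 := hv.norm_eq_one ⟨a, Finset.mem_Icc.2 (by lia)⟩
  have norm_last : ‖v (b + 1)‖ = 1 := hv.norm_eq_one ⟨b + 1, Finset.mem_Icc.2 (by lia)⟩
  have boundary : ‖z • (v (b + 1) - v a)‖ ≤ 2 * ‖z‖ := calc
    ‖z • (v (b + 1) - v a)‖ = ‖z‖ * ‖v (b + 1) - v a‖ := norm_smul _ _
    _ ≤ ‖z‖ * (‖v (b + 1)‖ + ‖v a‖) := by gcongr; exact norm_sub_le _ _
    _ = 2 * ‖z‖ := by rw [norm_first, norm_last]; ring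
  have hv_shift : Orthonormal 𝕜 ((Finset.Icc a b).restrict fun n ↦ v (n + 1)) :=
    orthonormal_restrict_comp hv
      (fun n hn ↦ by simp only [Finset.coe_Icc, Set.mem_Icc] at hn ⊢; lia)
      (add_left_injective 1).injOn
  rw [map_sum_sub_smul_sum_of_shift hab hR, ← norm_sum_smul_sq_of_orthonormal_restrict hv_shift,
    Real.sqrt_sq (norm_nonneg _)]
  exact (norm_add_le _ _).trans (by gcongr)

end Orthonormal

theorem stmt_4_general {E : Type*} [NormedAddCommGroup E] [InnerProductSpace ℂ E]
    {z : ℂ} (hz : 1 ≤ ‖z‖) {N : ℕ} (hNz : (N : ℝ) ^ 2 ≤ ‖z‖) {v : ℤ → E}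
    (hv : Orthonormal ℂ ((Finset.Icc (-(N : ℤ)) (N + 1)).restrict v)) {R C : E →ₗ[ℂ] E}
    (hR : ∀ n ∈ Finset.Icc (-(N : ℤ)) N, R (v n) = (z + 1 / 2 + n) • v (n + 1))
    (hC : ∀ n ∈ Finset.Icc (-(N : ℤ)) N, C (v n) = (2 * Complex.I * n) • v n)
    {ψ : E} (hψ : ψ = ∑ n ∈ Finset.Icc (-(N : ℤ)) N, v n) :
    ‖ψ‖ ^ 2 = 2 * (N : ℝ) + 1 ∧ ‖C ψ‖ ≤ 2 * (N : ℝ) * ‖ψ‖ ∧ ‖R ψ - z • ψ‖ ≤ 4 * ‖z‖ := by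
  subst hψ
  have hv_inner : Orthonormal ℂ ((Finset.Icc (-(N : ℤ)) N).restrict v) :=
    orthonormal_restrict_comp hv (Finset.Icc_subset_Icc_right (by lia)) (Set.injOn_id _)
  refine ⟨?_, norm_map_sum_le_of_diagonal hv_inner hC fun n hn ↦ ?_, ?_⟩
  · have hcard : (Finset.Icc (-(N : ℤ)) N).card = 2 * N + 1 := by rw [Int.card_Icc]; lia
    rw [norm_sum_sq_of_orthonormal_restrict hv_inner, hcard]
    push_cast
    rfl
  · have hn_abs : |(n : ℝ)| ≤ N := mod_cast abs_le.2 (Finset.mem_Icc.1 hn)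
    simpa using hn_abs
  · have hR_shift : ∀ n ∈ Finset.Icc (-(N : ℤ)) N,
        R (v n) = (z + ((n + 1 / 2 : ℝ) : ℂ)) • v (n + 1) := fun n hn ↦ by
      rw [hR n hn]
      push_cast
      ring_nf
    refine (norm_map_sum_sub_smul_sum_le_of_shift (by lia) hv hR_shift).trans ?_
    have hsqrt : √(∑ n ∈ Finset.Icc (-(N : ℤ)) N, ‖((n + 1 / 2 : ℝ) : ℂ)‖ ^ 2) ≤ 2 * ‖z‖ := by
      simp only [Complex.norm_real, Real.norm_eq_abs, sq_abs]
      exact Real.sqrt_le_iff.2 ⟨by positivity, sum_Icc_neg_add_half_sq_le hz hNz⟩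
    linarith

theorem stmt_4 {E : Type*} [NormedAddCommGroup E] [InnerProductSpace ℂ E]
    (T : ℝ) (hT : 1 ≤ T) (N : ℕ) (hN : N = ⌊Real.sqrt T⌋₊)
    (v : ℤ → E)
    (hnorm : ∀ n : ℤ, -(N : ℤ) ≤ n → n ≤ (N : ℤ) + 1 → ‖v n‖ = 1)
    (horth : ∀ m n : ℤ, -(N : ℤ) ≤ m → m ≤ (N : ℤ) + 1 → -(N : ℤ) ≤ n → n ≤ (N : ℤ) + 1 →
      m ≠ n → ⟪v m, v n⟫_ℂ = 0)
    (Rop Cop : E →ₗ[ℂ] E)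
    (hR : ∀ n : ℤ, -(N : ℤ) ≤ n → n ≤ (N : ℤ) →
      Rop (v n) = ((Complex.I * (T : ℂ) + 1 / 2 + (n : ℂ)) • v (n + 1)))
    (hC : ∀ n : ℤ, -(N : ℤ) ≤ n → n ≤ (N : ℤ) →
      Cop (v n) = ((2 * Complex.I * (n : ℂ)) • v n))
    (ψ : E) (hψ : ψ = ∑ n ∈ Finset.Icc (-(N : ℤ)) (N : ℤ), v n) :
    ‖ψ‖ ^ 2 = 2 * (N : ℝ) + 1 ∧
    ‖Cop ψ‖ ≤ 2 * (N : ℝ) * ‖ψ‖ ∧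
    ‖Rop ψ - (Complex.I * (T : ℂ)) • ψ‖ ≤ 4 * T := by
  have hnormT : ‖Complex.I * (T : ℂ)‖ = T := by simp [abs_of_nonneg (zero_le_one.trans hT)]
  have hNT : (N : ℝ) ^ 2 ≤ T := hN ▸
    (Real.le_sqrt (by positivity) (by positivity)).1 (Nat.floor_le (Real.sqrt_nonneg T))
  have hv : Orthonormal ℂ ((Finset.Icc (-(N : ℤ)) (N + 1)).restrict v) := by
    simp only [Orthonormal, Pairwise, Subtype.forall, Finset.mem_Icc, Finset.restrict, ne_eq,
      Subtype.mk.injEq]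
    exact ⟨fun n hn ↦ hnorm n hn.1 hn.2, fun m hm n hn ↦ horth m n hm.1 hm.2 hn.1 hn.2⟩
  simp only [← and_imp, ← Finset.mem_Icc] at hR hC
  simpa only [hnormT] using stmt_4_general (hnormT.symm ▸ hT) (hnormT.symm ▸ hNT) hv hR hC hψ
end

section
/- Let p be a prime and m ≥ 1 an integer. The subgroup K(m) of GL₂(ℤ_p) is generated by the three sets U⁺(m) = { [[1, x],[0, 1]] : x ∈ p^m ℤ_p }, U⁻(m) = { [[1, 0],[y, 1]] : y ∈ p^m ℤ_p }, and the set of diagonal matrices lying in K(m). -/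
/-- The principal congruence subgroup `K(m)` of `GL₂(ℤ_p)`: matrices `g` with every entry of
`g − 1` lying in `p^m ℤ_p`. -/
def congK (p : ℕ) [Fact p.Prime] (m : ℕ) : Subgroup (Matrix (Fin 2) (Fin 2) ℤ_[p])ˣ where
  carrier := {g | ∀ i j, (p : ℤ_[p]) ^ m ∣ ((g : Matrix (Fin 2) (Fin 2) ℤ_[p]) - 1) i j}
  one_mem' := by
    intro i j
    simp
  mul_mem' := by
    intro a b ha hb i j
    have key : ((a * b : (Matrix (Fin 2) (Fin 2) ℤ_[p])ˣ) : Matrix (Fin 2) (Fin 2) ℤ_[p]) - 1 =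
        ((a : Matrix (Fin 2) (Fin 2) ℤ_[p]) - 1) * ((b : Matrix (Fin 2) (Fin 2) ℤ_[p]) - 1) +
          (((a : Matrix (Fin 2) (Fin 2) ℤ_[p]) - 1) + ((b : Matrix (Fin 2) (Fin 2) ℤ_[p]) - 1)) := by
      rw [Units.val_mul]
      noncomm_ring
    rw [key]
    simp only [Matrix.add_apply, Matrix.mul_apply]
    exact dvd_add (Finset.dvd_sum fun k _ => (ha i k).mul_right _) (dvd_add (ha i j) (hb i j))
  inv_mem' := by
    intro a ha i j
    have key : ((a⁻¹ : (Matrix (Fin 2) (Fin 2) ℤ_[p])ˣ) : Matrix (Fin 2) (Fin 2) ℤ_[p]) - 1 =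
        ((a⁻¹ : (Matrix (Fin 2) (Fin 2) ℤ_[p])ˣ) : Matrix (Fin 2) (Fin 2) ℤ_[p]) *
          (1 - (a : Matrix (Fin 2) (Fin 2) ℤ_[p])) := by
      rw [mul_sub, mul_one, Units.inv_mul]
    rw [key, Matrix.mul_apply]
    refine Finset.dvd_sum fun k _ => Dvd.dvd.mul_left ?_ _
    have hk : ((1 : Matrix (Fin 2) (Fin 2) ℤ_[p]) - (a : Matrix (Fin 2) (Fin 2) ℤ_[p])) k j =
        -(((a : Matrix (Fin 2) (Fin 2) ℤ_[p]) - 1) k j) := by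
      simp [Matrix.sub_apply]
    rw [hk]
    exact dvd_neg.mpr (ha k j)

/-!
Over a commutative ring `R`, let `I` be an ideal in the Jacobson radical. If `g ≡ 1` modulo `I`,
then its top left entry `a` is a unit, and clearing the first row and column gives
`g = [[1, 0], [c a⁻¹, 1]] * D * [[1, a⁻¹ b], [0, 1]]` with `D` diagonal. The two outer factors are
congruent to `1` modulo `I`, hence so is `D`. The ideal `p ^ m ℤ_p` with `m ≥ 1` is such an `I`.
-/

open Matrix Matrix.GeneralLinearGroup
open scoped MatrixGroups

section PrincipalCongruenceSubgroup

variable {n R : Type*} [DecidableEq n] [Fintype n] [CommRing R] {I : Ideal R}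

variable (n) in
/-- The principal congruence subgroup of level `I` in `GL n R`, as the kernel of reduction modulo
`I`; this makes `congK p m` the case `I = (p ^ m)`, `n = Fin 2`. -/
def principalCongruenceSubgroup (I : Ideal R) : Subgroup (GL n R) :=
  (GeneralLinearGroup.map (Ideal.Quotient.mk I)).ker

theorem mem_principalCongruenceSubgroup_iff {g : GL n R} :
    g ∈ principalCongruenceSubgroup n I ↔ ∀ i j, (g.val - 1) i j ∈ I := by
  rw [principalCongruenceSubgroup, MonoidHom.mem_ker, GeneralLinearGroup.ext_iff]
  refine forall₂_congr fun i j => ?_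
  rw [GeneralLinearGroup.map_apply, ← Ideal.Quotient.eq_zero_iff_mem, Matrix.sub_apply, map_sub,
    sub_eq_zero, Units.val_one, Matrix.one_apply, Matrix.one_apply, apply_ite (Ideal.Quotient.mk I),
    map_one, map_zero]

theorem isUnit_diag_of_mem_principalCongruenceSubgroup (hI : I ≤ Ideal.jacobson ⊥) {g : GL n R}
    (hg : g ∈ principalCongruenceSubgroup n I) (i : n) : IsUnit (g i i) := by
  refine Ideal.isUnit_of_sub_one_mem_jacobson_bot _ (hI ?_)
  simpa using mem_principalCongruenceSubgroup_iff.mp hg i i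

theorem apply_mem_of_mem_principalCongruenceSubgroup {g : GL n R}
    (hg : g ∈ principalCongruenceSubgroup n I) {i j : n} (hij : i ≠ j) : g i j ∈ I := by
  simpa [hij] using mem_principalCongruenceSubgroup_iff.mp hg i j

end PrincipalCongruenceSubgroup

section FinTwo

/-- The lower unipotent one-parameter subgroup of `GL₂`, the counterpart of
`Matrix.GeneralLinearGroup.upperRightHom`; likewise encoded as an additive character. -/
def lowerLeftHom {R : Type*} [Ring R] : AddChar R (GL (Fin 2) R) where
  toFun y := ⟨!![1, 0; y, 1], !![1, 0; -y, 1], by simp [one_fin_two], by simp [one_fin_two]⟩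
  map_zero_eq_one' := by simp [Units.ext_iff, one_fin_two]
  map_add_eq_mul' y z := by simp [Units.ext_iff, add_comm]

variable {R : Type*} [CommRing R]

theorem upperRightHom_mem_principalCongruenceSubgroup {I : Ideal R} {x : R} (hx : x ∈ I) :
    upperRightHom x ∈ principalCongruenceSubgroup (Fin 2) I := by
  simp [mem_principalCongruenceSubgroup_iff, upperRightHom, Fin.forall_fin_two, hx]

theorem lowerLeftHom_mem_principalCongruenceSubgroup {I : Ideal R} {y : R} (hy : y ∈ I) :
    lowerLeftHom y ∈ principalCongruenceSubgroup (Fin 2) I := by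
  simp [mem_principalCongruenceSubgroup_iff, lowerLeftHom, Fin.forall_fin_two, hy]

theorem lowerUnipotent_mul_mul_upperUnipotent {a u : R} (hu : a * u = 1) (b c d : R) :
    !![1, 0; -(c * u), 1] * !![a, b; c, d] * !![1, -(u * b); 0, 1] =
      !![a, 0; 0, d - c * u * b] := by
  have clear_row : a * -(u * b) + b = 0 := by linear_combination (-b) * hu
  have clear_col : -(c * u) * a + c = 0 := by linear_combination (-c) * hu
  have schur_complement : -(c * u) * b + d = d - c * u * b := by ring
  simp only [mul_fin_two, one_mul, zero_mul, mul_zero, mul_one, add_zero, zero_add, clear_row,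
    clear_col, schur_complement]

theorem isDiag_lowerLeftHom_inv_mul_mul_upperRightHom_inv (g : GL (Fin 2) R) {u : R}
    (hu : g 0 0 * u = 1) :
    ((lowerLeftHom (g 1 0 * u))⁻¹ * g * (upperRightHom (u * g 0 1))⁻¹).val.IsDiag := by
  have hL : (lowerLeftHom (g 1 0 * u))⁻¹.val = !![1, 0; -(g 1 0 * u), 1] := rfl
  have hU : (upperRightHom (u * g 0 1))⁻¹.val = !![1, -(u * g 0 1); 0, 1] := rfl
  have hLgU := lowerUnipotent_mul_mul_upperUnipotent hu (g 0 1) (g 1 0) (g 1 1)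
  rw [← eta_fin_two g.val] at hLgU
  rw [Units.val_mul, Units.val_mul, hL, hU, hLgU]
  simp [IsDiag, Pairwise, Fin.forall_fin_two]

theorem exists_lowerLeftHom_mul_isDiag_mul_upperRightHom {I : Ideal R} (hI : I ≤ Ideal.jacobson ⊥)
    {g : GL (Fin 2) R} (hg : g ∈ principalCongruenceSubgroup (Fin 2) I) :
    ∃ y ∈ I, ∃ d ∈ principalCongruenceSubgroup (Fin 2) I, ∃ x ∈ I,
      d.val.IsDiag ∧ g = lowerLeftHom y * d * upperRightHom x := by
  obtain ⟨u, hu⟩ := (isUnit_diag_of_mem_principalCongruenceSubgroup hI hg 0).exists_right_inv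
  have hy : g 1 0 * u ∈ I :=
    I.mul_mem_right _ (apply_mem_of_mem_principalCongruenceSubgroup hg one_ne_zero)
  have hx : u * g 0 1 ∈ I :=
    I.mul_mem_left _ (apply_mem_of_mem_principalCongruenceSubgroup hg zero_ne_one)
  refine ⟨_, hy, (lowerLeftHom (g 1 0 * u))⁻¹ * g * (upperRightHom (u * g 0 1))⁻¹, ?_, _, hx, ?_,
    by group⟩
  · exact mul_mem (mul_mem (inv_mem (lowerLeftHom_mem_principalCongruenceSubgroup hy)) hg)
      (inv_mem (upperRightHom_mem_principalCongruenceSubgroup hx))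
  · exact isDiag_lowerLeftHom_inv_mul_mul_upperRightHom_inv g hu

theorem stmt_7_general {I : Ideal R} (hI : I ≤ Ideal.jacobson ⊥) :
    Subgroup.closure
      ({g : GL (Fin 2) R | ∃ x ∈ I, g.val = !![1, x; 0, 1]} ∪
        {g : GL (Fin 2) R | ∃ y ∈ I, g.val = !![1, 0; y, 1]} ∪
        {g : GL (Fin 2) R | g ∈ principalCongruenceSubgroup (Fin 2) I ∧ g.val.IsDiag}) =
      principalCongruenceSubgroup (Fin 2) I := by
  apply le_antisymm
  · rw [Subgroup.closure_le]
    rintro g ((⟨x, hx, hg⟩ | ⟨y, hy, hg⟩) | ⟨hg, -⟩)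
    · obtain rfl : g = upperRightHom x := Units.ext hg
      exact upperRightHom_mem_principalCongruenceSubgroup hx
    · obtain rfl : g = lowerLeftHom y := Units.ext hg
      exact lowerLeftHom_mem_principalCongruenceSubgroup hy
    · exact hg
  · intro g hg
    obtain ⟨y, hy, d, hd, x, hx, hdiag, rfl⟩ :=
      exists_lowerLeftHom_mul_isDiag_mul_upperRightHom hI hg
    refine mul_mem (mul_mem ?_ ?_) ?_ <;> apply Subgroup.subset_closure
    · exact .inl (.inr ⟨y, hy, rfl⟩)
    · exact .inr ⟨hd, hdiag⟩
    · exact .inl (.inl ⟨x, hx, rfl⟩)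

end FinTwo

section PadicInt

variable (p : ℕ) [Fact p.Prime]

theorem congK_eq_principalCongruenceSubgroup (m : ℕ) :
    congK p m = principalCongruenceSubgroup (Fin 2) (Ideal.span {(p : ℤ_[p]) ^ m}) := by
  ext g
  simp only [mem_principalCongruenceSubgroup_iff, Ideal.mem_span_singleton]
  rfl

theorem span_p_pow_le_jacobson_bot {m : ℕ} (hm : m ≠ 0) :
    Ideal.span {(p : ℤ_[p]) ^ m} ≤ Ideal.jacobson ⊥ := by
  rw [IsLocalRing.jacobson_eq_maximalIdeal _ bot_ne_top, PadicInt.maximalIdeal_eq_span_p,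
    ← Ideal.span_singleton_pow]
  exact Ideal.pow_le_self hm

end PadicInt

/-- `K(m)` is generated by the upper unipotent matrices `U⁺(m)`, the lower unipotent
matrices `U⁻(m)`, and the diagonal matrices lying in `K(m)`. -/
theorem stmt_7 (p : ℕ) [Fact p.Prime] (m : ℕ) (hm : 1 ≤ m) :
    Subgroup.closure
      ({g : (Matrix (Fin 2) (Fin 2) ℤ_[p])ˣ |
          ∃ x : ℤ_[p], (p : ℤ_[p]) ^ m ∣ x ∧ (g : Matrix (Fin 2) (Fin 2) ℤ_[p]) = !![1, x; 0, 1]} ∪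
        {g : (Matrix (Fin 2) (Fin 2) ℤ_[p])ˣ |
          ∃ y : ℤ_[p], (p : ℤ_[p]) ^ m ∣ y ∧ (g : Matrix (Fin 2) (Fin 2) ℤ_[p]) = !![1, 0; y, 1]} ∪
        {g : (Matrix (Fin 2) (Fin 2) ℤ_[p])ˣ |
          g ∈ congK p m ∧ ∀ i j, i ≠ j → (g : Matrix (Fin 2) (Fin 2) ℤ_[p]) i j = 0}) =
      congK p m := by
  simpa only [congK_eq_principalCongruenceSubgroup, Ideal.mem_span_singleton, IsDiag, Pairwise]
    using stmt_7_general (span_p_pow_le_jacobson_bot p (Nat.one_le_iff_ne_zero.mp hm))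
end

section
/- Let p be an odd prime and r ≥ 1 an integer. Let D̃(r) be the subgroup of GL₂(ℤ_p) generated by the invertible diagonal matrices together with K(r) (this subgroup equals the set of products d·k with d diagonal invertible and k ∈ K(r)). If ξ₁, ξ₂ : D̃(r) → ℂˣ are group homomorphisms that agree on every invertible diagonal matrix over ℤ_p, then ξ₁ = ξ₂. -/
/-- The subgroup `D̃(r)` of `GL₂(ℤ_p)` generated by the invertible diagonal matrices together
with `K(r)`. -/
noncomputable def Dtilde (p : ℕ) [Fact p.Prime] (r : ℕ) : Subgroup (Matrix (Fin 2) (Fin 2) ℤ_[p])ˣ :=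
  Subgroup.closure
    ({g : (Matrix (Fin 2) (Fin 2) ℤ_[p])ˣ |
        ∀ i j, i ≠ j → (g : Matrix (Fin 2) (Fin 2) ℤ_[p]) i j = 0} ∪
      (congK p r : Set (Matrix (Fin 2) (Fin 2) ℤ_[p])ˣ))

/-!
A homomorphism `ξ` to a commutative group kills commutators. If `d` is diagonal with entry `u` in
position `i` and `1` elsewhere, then `⁅d, 1 + c E_ij⁆ = 1 + (u - 1) c E_ij`. Over `ℤ_p` with `p` odd
one may take `u = 2`, so that `u - 1` is a unit and `ξ` is trivial on every transvection
`1 + c E_ij` with `c ∈ p ^ r ℤ_p`. An element of `K(r)` is a product of such transvections and of a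
diagonal matrix (lower times diagonal times upper triangular), hence `ξ` is determined by its values
on diagonal matrices. The argument works over any local ring that has a unit `u` with `u - 1` a
unit, that is, whose residue field is not `𝔽₂`.
-/

open Matrix
open scoped MatrixGroups commutatorElement

section Group

variable {G M : Type*} [Group G]

lemma hom_eq_of_eqOn_generators [Monoid M] {H : Subgroup G} {s : Set G}
    (hH : H = Subgroup.closure s) {f g : H →* M}
    (h : ∀ x (hx : x ∈ H), x ∈ s → f ⟨x, hx⟩ = g ⟨x, hx⟩) : f = g := by
  subst hH
  exact MonoidHom.eq_of_eqOn_dense Subgroup.closure_closure_coe_preimage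
    fun x hx ↦ h x x.2 hx

lemma map_commutatorElement_eq_one [CommGroup M] (f : G →* M) (a b : G) : f ⁅a, b⁆ = 1 := by
  rw [map_commutatorElement, commutatorElement_eq_one_iff_mul_comm, mul_comm]

end Group

section GeneralLinear

variable {n R : Type*} [Fintype n] [DecidableEq n] [CommRing R]

/-- The invertible diagonal matrix with prescribed units on the diagonal, as a homomorphism from
the split torus to `GL n R`. -/
def diagonalUnits : (n → Rˣ) →* GL n R :=
  (Units.map (diagonalRingHom n R).toMonoidHom).comp MulEquiv.piUnits.symm.toMonoidHom

lemma coe_diagonalUnits (d : n → Rˣ) :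
    (diagonalUnits d : Matrix n n R) = diagonal fun i ↦ (d i : R) :=
  rfl

lemma isDiag_diagonalUnits (d : n → Rˣ) : (diagonalUnits d : Matrix n n R).IsDiag :=
  isDiag_diagonal _

/-- The transvection `1 + c E_ij`, `i ≠ j`, as an element of `GL n R`. -/
def transvectionGL {i j : n} (hij : i ≠ j) (c : R) : GL n R :=
  (SpecialLinearGroup.transvection hij c).toGL

lemma coe_transvectionGL {i j : n} (hij : i ≠ j) (c : R) :
    (transvectionGL hij c : Matrix n n R) = transvection i j c :=
  rfl

lemma transvectionGL_add {i j : n} (hij : i ≠ j) (b c : R) :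
    transvectionGL hij (b + c) = transvectionGL hij b * transvectionGL hij c := by
  rw [transvectionGL, SpecialLinearGroup.transvection_add, map_mul]
  rfl

lemma diagonalUnits_mul_transvectionGL {i j : n} (hij : i ≠ j) (u : Rˣ) (c : R) :
    diagonalUnits (Pi.mulSingle i u) * transvectionGL hij c =
      transvectionGL hij (u * c) * diagonalUnits (Pi.mulSingle i u) := by
  have hsingle : diagonal (fun k ↦ ((Pi.mulSingle i u : n → Rˣ) k : R)) * single i j c =
      single i j (u * c) * diagonal fun k ↦ ((Pi.mulSingle i u : n → Rˣ) k : R) := by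
    ext a b
    rw [diagonal_mul, mul_diagonal]
    by_cases hentry : i = a ∧ j = b
    · obtain ⟨rfl, rfl⟩ := hentry
      simp [hij.symm]
    · simp [hentry]
  apply Units.ext
  simp only [Units.val_mul, coe_diagonalUnits, coe_transvectionGL, transvection, mul_add, add_mul,
    mul_one, one_mul, hsingle]

lemma commutatorElement_diagonalUnits_transvectionGL {i j : n} (hij : i ≠ j) (u : Rˣ) (c : R) :
    ⁅diagonalUnits (Pi.mulSingle i u), transvectionGL hij c⁆ =
      transvectionGL hij ((u - 1) * c) := by
  have hadd : transvectionGL hij (u * c) =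
      transvectionGL hij ((u - 1) * c) * transvectionGL hij c := by
    rw [← transvectionGL_add, sub_mul, one_mul, sub_add_cancel]
  rw [commutatorElement_def, diagonalUnits_mul_transvectionGL, mul_inv_cancel_right, hadd,
    mul_inv_cancel_right]

/-- The principal congruence subgroup of `GL n R` of level `I`, consisting of the matrices congruent
to `1` modulo `I`. -/
def congruenceSubgroup (n : Type*) [Fintype n] [DecidableEq n] (I : Ideal R) : Subgroup (GL n R) :=
  (GeneralLinearGroup.map (Ideal.Quotient.mk I)).ker

lemma mem_congruenceSubgroup {I : Ideal R} {g : GL n R} :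
    g ∈ congruenceSubgroup n I ↔ ∀ i j, (g.val - 1) i j ∈ I := by
  rw [congruenceSubgroup, MonoidHom.mem_ker, GeneralLinearGroup.ext_iff]
  refine forall₂_congr fun i j ↦ ?_
  rw [GeneralLinearGroup.map_apply, Matrix.sub_apply, ← Ideal.Quotient.mk_eq_mk_iff_sub_mem]
  by_cases hij : i = j <;> simp [hij, Matrix.one_apply]

lemma transvectionGL_mem_congruenceSubgroup {I : Ideal R} {i j : n} (hij : i ≠ j) {c : R}
    (hc : c ∈ I) : transvectionGL hij c ∈ congruenceSubgroup n I := by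
  refine mem_congruenceSubgroup.mpr fun a b ↦ ?_
  rw [coe_transvectionGL, transvection, add_sub_cancel_left, single_apply]
  split_ifs
  exacts [hc, I.zero_mem]

/-- The subgroup of `GL n R` generated by the invertible diagonal matrices and the principal
congruence subgroup of level `I`; for `R = ℤ_p`, `I = (p ^ r)` and `n = Fin 2` this is `D̃(r)`. -/
def diagonalCongruenceSubgroup (n : Type*) [Fintype n] [DecidableEq n] (I : Ideal R) :
    Subgroup (GL n R) :=
  Subgroup.closure ({g : GL n R | g.val.IsDiag} ∪ congruenceSubgroup n I)

/-- The invertible diagonal matrices together with the transvections whose off-diagonal entry lies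
in `I`. -/
def diagonalsAndTransvections (n : Type*) [Fintype n] [DecidableEq n] (I : Ideal R) :
    Set (GL n R) :=
  {g | g.val.IsDiag} ∪ {g | ∃ (i j : n) (hij : i ≠ j), ∃ c ∈ I, g = transvectionGL hij c}

lemma diagonalUnits_mem_diagonalsAndTransvections (I : Ideal R) (d : n → Rˣ) :
    diagonalUnits d ∈ diagonalsAndTransvections n I :=
  Or.inl (isDiag_diagonalUnits d)

lemma transvectionGL_mem_diagonalsAndTransvections {I : Ideal R} {i j : n} (hij : i ≠ j) {c : R}
    (hc : c ∈ I) : transvectionGL hij c ∈ diagonalsAndTransvections n I :=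
  Or.inr ⟨i, j, hij, c, hc, rfl⟩

lemma diagonalsAndTransvections_subset_union (I : Ideal R) :
    diagonalsAndTransvections n I ⊆ {g : GL n R | g.val.IsDiag} ∪ congruenceSubgroup n I := by
  refine Set.union_subset_union_right _ ?_
  rintro _ ⟨i, j, hij, c, hc, rfl⟩
  exact transvectionGL_mem_congruenceSubgroup hij hc

lemma map_transvectionGL_eq_one {A : Type*} [CommGroup A] {I : Ideal R} {u : Rˣ}
    (hu : IsUnit (u - 1 : R)) {H : Subgroup (GL n R)}
    (hH : diagonalsAndTransvections n I ⊆ H) (ξ : H →* A) {i j : n} (hij : i ≠ j) {c : R}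
    (hc : c ∈ I) (hmem : transvectionGL hij c ∈ H) : ξ ⟨transvectionGL hij c, hmem⟩ = 1 := by
  obtain ⟨b, hb, rfl⟩ : ∃ b ∈ I, (u - 1 : R) * b = c := by
    obtain ⟨w, hw⟩ := hu
    exact ⟨↑w⁻¹ * c, I.mul_mem_left _ hc, by rw [← hw, Units.mul_inv_cancel_left]⟩
  let d : H := ⟨diagonalUnits (Pi.mulSingle i u),
    hH (diagonalUnits_mem_diagonalsAndTransvections I _)⟩
  let t : H := ⟨transvectionGL hij b, hH (transvectionGL_mem_diagonalsAndTransvections hij hb)⟩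
  have hcomm : (⟨transvectionGL hij ((u - 1) * b), hmem⟩ : H) = ⁅d, t⁆ :=
    Subtype.ext (commutatorElement_diagonalUnits_transvectionGL hij u b).symm
  rw [hcomm, map_commutatorElement_eq_one]

theorem hom_eq_of_eqOn_diagonals {A : Type*} [CommGroup A] {I : Ideal R} {u : Rˣ}
    (hu : IsUnit (u - 1 : R)) {H : Subgroup (GL n R)}
    (hH : H = Subgroup.closure (diagonalsAndTransvections n I)) {ξ₁ ξ₂ : H →* A}
    (hdiag : ∀ (d : GL n R) (hd : d ∈ H), d.val.IsDiag → ξ₁ ⟨d, hd⟩ = ξ₂ ⟨d, hd⟩) : ξ₁ = ξ₂ := by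
  have hsub : diagonalsAndTransvections n I ⊆ H := hH ▸ Subgroup.subset_closure
  refine hom_eq_of_eqOn_generators hH fun g hg hgen ↦ ?_
  rcases hgen with hgdiag | ⟨i, j, hij, c, hc, rfl⟩
  · exact hdiag g hg hgdiag
  · rw [map_transvectionGL_eq_one hu hsub ξ₁ hij hc, map_transvectionGL_eq_one hu hsub ξ₂ hij hc]

end GeneralLinear

section GeneralLinearTwo

variable {R : Type*} [CommRing R]

lemma isUnit_det_fin_two_entries (g : GL (Fin 2) R) : IsUnit (g 0 0 * g 1 1 - g 0 1 * g 1 0) := by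
  rw [← det_fin_two]
  exact isUnits_det_units g

lemma exists_eq_lower_mul_diagonal_mul_upper (g : GL (Fin 2) R) {u : Rˣ} (hu : g 0 0 = u) :
    ∃ v : Rˣ, g = transvectionGL one_ne_zero (g 1 0 * ↑u⁻¹) * diagonalUnits ![u, v] *
      transvectionGL zero_ne_one (↑u⁻¹ * g 0 1) := by
  have hschur : (u : R) * (g 1 1 - g 1 0 * ↑u⁻¹ * g 0 1) = g 0 0 * g 1 1 - g 0 1 * g 1 0 := by
    linear_combination (-(g 1 0 * g 0 1)) * u.mul_inv - g 1 1 * hu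
  obtain ⟨v, hv⟩ : IsUnit (g 1 1 - g 1 0 * ↑u⁻¹ * g 0 1) :=
    isUnit_of_mul_isUnit_right (hschur ▸ isUnit_det_fin_two_entries g)
  refine ⟨v, ?_⟩
  ext i j
  fin_cases i <;> fin_cases j <;>
    simp [coe_transvectionGL, coe_diagonalUnits, transvection, Matrix.mul_apply, Fin.sum_univ_two,
      hu, hv, mul_assoc]

lemma mem_closure_of_isUnit_apply_zero_zero {I : Ideal R} {g : GL (Fin 2) R}
    (hg : g ∈ congruenceSubgroup (Fin 2) I) (hunit : IsUnit (g 0 0)) :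
    g ∈ Subgroup.closure (diagonalsAndTransvections (Fin 2) I) := by
  have hmem := mem_congruenceSubgroup.mp hg
  have h01 : g 0 1 ∈ I := by simpa using hmem 0 1
  have h10 : g 1 0 ∈ I := by simpa using hmem 1 0
  obtain ⟨u, hu⟩ := hunit
  obtain ⟨v, hv⟩ := exists_eq_lower_mul_diagonal_mul_upper g hu.symm
  rw [hv]
  exact mul_mem (mul_mem
    (Subgroup.subset_closure
      (transvectionGL_mem_diagonalsAndTransvections _ (I.mul_mem_right _ h10)))
    (Subgroup.subset_closure (diagonalUnits_mem_diagonalsAndTransvections I _)))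
    (Subgroup.subset_closure
      (transvectionGL_mem_diagonalsAndTransvections _ (I.mul_mem_left _ h01)))

variable [IsLocalRing R]

lemma isUnit_apply_zero_zero_add_apply_one_zero {g : GL (Fin 2) R} (h00 : ¬IsUnit (g 0 0)) :
    IsUnit (g 0 0 + g 1 0) := by
  have h10 : IsUnit (g 1 0) := by
    by_contra h10
    exact IsLocalRing.nonunits_add (a := g 0 0 * g 1 1) (b := -(g 0 1 * g 1 0))
      (mul_mem_nonunits_left h00) (by simpa using fun _ ↦ h10)
      (by simpa [sub_eq_add_neg] using isUnit_det_fin_two_entries g)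
  by_contra hsum
  refine IsLocalRing.nonunits_add (a := g 0 0 + g 1 0) (b := -g 0 0) hsum ?_ ?_
  · simpa using h00
  · simpa using h10

lemma congruenceSubgroup_le_closure_transvections (I : Ideal R) :
    congruenceSubgroup (Fin 2) I ≤ Subgroup.closure (diagonalsAndTransvections (Fin 2) I) := by
  intro g hg
  by_cases h00 : IsUnit (g 0 0)
  · exact mem_closure_of_isUnit_apply_zero_zero hg h00
  -- Here `1 - g 0 0` is a unit lying in `I`, so `I = ⊤` and a row operation makes the pivot a unit.
  have htop : (1 : R) ∈ I := by
    have hpivot : g 0 0 - 1 ∈ I := by simpa using mem_congruenceSubgroup.mp hg 0 0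
    have hunit := (IsLocalRing.isUnit_or_isUnit_one_sub_self (g 0 0)).resolve_left h00
    rw [← I.eq_top_iff_one]
    exact I.eq_top_of_isUnit_mem (by rwa [← neg_sub, I.neg_mem_iff]) hunit
  let t : GL (Fin 2) R := transvectionGL zero_ne_one 1
  have ht : t ∈ Subgroup.closure (diagonalsAndTransvections (Fin 2) I) :=
    Subgroup.subset_closure (transvectionGL_mem_diagonalsAndTransvections _ htop)
  refine (mul_mem_cancel_left ht).mp (mem_closure_of_isUnit_apply_zero_zero ?_ ?_)
  · exact mul_mem (transvectionGL_mem_congruenceSubgroup _ htop) hg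
  · simpa [t, coe_transvectionGL] using isUnit_apply_zero_zero_add_apply_one_zero h00

lemma diagonalCongruenceSubgroup_eq_closure_transvections (I : Ideal R) :
    diagonalCongruenceSubgroup (Fin 2) I =
      Subgroup.closure (diagonalsAndTransvections (Fin 2) I) := by
  refine le_antisymm ((Subgroup.closure_le _).mpr (Set.union_subset ?_ ?_))
    (Subgroup.closure_mono (diagonalsAndTransvections_subset_union I))
  · exact Set.subset_union_left.trans Subgroup.subset_closure
  · exact congruenceSubgroup_le_closure_transvections I

theorem stmt_8_general {A : Type*} [CommGroup A] (I : Ideal R) {u : Rˣ} (hu : IsUnit (u - 1 : R))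
    (ξ₁ ξ₂ : diagonalCongruenceSubgroup (Fin 2) I →* A)
    (hagree : ∀ (d : GL (Fin 2) R) (hd : d ∈ diagonalCongruenceSubgroup (Fin 2) I),
      d.val.IsDiag → ξ₁ ⟨d, hd⟩ = ξ₂ ⟨d, hd⟩) :
    ξ₁ = ξ₂ :=
  hom_eq_of_eqOn_diagonals hu (diagonalCongruenceSubgroup_eq_closure_transvections I) hagree

end GeneralLinearTwo

section PadicInt

variable (p : ℕ) [Fact p.Prime]

lemma congK_eq_congruenceSubgroup (m : ℕ) :
    congK p m = congruenceSubgroup (Fin 2) (Ideal.span {(p : ℤ_[p]) ^ m}) := by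
  ext g
  simp only [mem_congruenceSubgroup, Ideal.mem_span_singleton]
  rfl

lemma Dtilde_eq_diagonalCongruenceSubgroup (r : ℕ) :
    Dtilde p r = diagonalCongruenceSubgroup (Fin 2) (Ideal.span {(p : ℤ_[p]) ^ r}) := by
  rw [Dtilde, congK_eq_congruenceSubgroup]
  rfl

variable {p}

lemma isUnit_two_padicInt (hp : Odd p) : IsUnit (2 : ℤ_[p]) := by
  rw [← Nat.cast_ofNat, PadicInt.isUnit_iff, PadicInt.norm_natCast_eq_one_iff]
  exact hp.coprime_two_right

end PadicInt

/-- Two characters of `D̃(r)` agreeing on all invertible diagonal matrices are equal. -/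
theorem stmt_8 (p : ℕ) [Fact p.Prime] (hp : Odd p) (r : ℕ) (hr : 1 ≤ r)
    (ξ₁ ξ₂ : Dtilde p r →* ℂˣ)
    (hagree : ∀ (d : (Matrix (Fin 2) (Fin 2) ℤ_[p])ˣ) (hd : d ∈ Dtilde p r),
      (∀ i j, i ≠ j → (d : Matrix (Fin 2) (Fin 2) ℤ_[p]) i j = 0) →
        ξ₁ ⟨d, hd⟩ = ξ₂ ⟨d, hd⟩) :
    ξ₁ = ξ₂ := by
  obtain ⟨u, hu⟩ := isUnit_two_padicInt hp
  have hu_sub_one : IsUnit (u - 1 : ℤ_[p]) := by norm_num [hu]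
  revert ξ₁ ξ₂
  rw [Dtilde_eq_diagonalCongruenceSubgroup]
  exact fun ξ₁ ξ₂ hagree ↦ stmt_8_general _ hu_sub_one ξ₁ ξ₂ hagree
end

section
/- Let p be a prime and m ≥ 1 an integer. Let B(ℤ_p) denote the upper triangular matrices in GL₂(ℤ_p), and let K_H(m,m) denote the set of matrices in GL₂(ℤ_p) both of whose off-diagonal entries lie in p^m ℤ_p. Then GL₂(ℤ_p) is the disjoint union of the double cosets B(ℤ_p)·γᵢ·K_H(m,m) for i = 1, …, m and B(ℤ_p)·γ̃ⱼ·K_H(m,m) for j = 0, …, m, where γᵢ = [[1, 0],[pⁱ, 1]] and γ̃ⱼ = [[0, −1],[1, pʲ]]. -/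
/-!
Left multiplication by upper triangular matrices leaves of an invertible matrix only its bottom
row, up to a unit. Over a local ring, with `q` in the maximal ideal, right multiplication by the
matrices that are diagonal modulo `q` then identifies two such rows exactly when their entries
agree modulo `q` up to units, entry by entry. Over a discrete valuation ring with uniformizer `ϖ`
and `q = ϖ ^ m`, every entry is in this sense a unique power `ϖ ^ e` with `e ≤ m`, and invertibility
means that one of the two exponents is `0`: the pairs `(i, 0)` are the bottom rows of the `γᵢ`, the
pairs `(0, j)` those of the `γ̃ⱼ`.
-/

open DoubleCoset Matrix

section AssociatedMod

variable {R : Type*} [CommRing R] {q x y : R}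

/-- `x` and `y` agree modulo `q` up to a unit of `R`. Asking for a unit of `R` rather than of
`R ⧸ (q)` makes no difference over a local ring when `q` is not a unit. -/
def AssociatedMod (q x y : R) : Prop :=
  ∃ u : R, IsUnit u ∧ q ∣ x - u * y

namespace AssociatedMod

lemma dvd_iff {d : R} (h : AssociatedMod q x y) (hd : d ∣ q) : d ∣ x ↔ d ∣ y := by
  obtain ⟨u, hu, hq⟩ := h
  rw [← hu.dvd_mul_left (b := y)]
  exact dvd_iff_dvd_of_dvd_sub (hd.trans hq)

lemma isUnit_iff [IsLocalRing R] (h : AssociatedMod q x y) (hq : ¬IsUnit q) :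
    IsUnit x ↔ IsUnit y := by
  obtain ⟨u, hu, hdvd⟩ := h
  have hsub : x - u * y ∈ IsLocalRing.maximalIdeal R := Ideal.mem_of_dvd _ hdvd hq
  have hmem : x ∈ IsLocalRing.maximalIdeal R ↔ u * y ∈ IsLocalRing.maximalIdeal R := by
    simpa only [sub_add_cancel] using
      (IsLocalRing.maximalIdeal R).add_mem_iff_right (b := u * y) hsub
  rw [← not_iff_not]
  simpa [hu] using hmem

end AssociatedMod

end AssociatedMod

section DoubleCosets

variable {R : Type*} [CommRing R] {q : R} {g h γ k : Matrix (Fin 2) (Fin 2) R}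

/-- The group `B(R)` of invertible upper triangular matrices, as a set of matrices. -/
def upperTriangularGL (R : Type*) [CommRing R] : Set (Matrix (Fin 2) (Fin 2) R) :=
  {b | IsUnit b.det ∧ b 1 0 = 0}

/-- The group of invertible matrices that are diagonal modulo `q`, as a set of matrices; this is
`K_H(m, m)` for `R = ℤ_p` and `q = p ^ m`. -/
def diagonalModGL (q : R) : Set (Matrix (Fin 2) (Fin 2) R) :=
  {k | IsUnit k.det ∧ q ∣ k 0 1 ∧ q ∣ k 1 0}

lemma exists_upperTriangularGL_mul_eq (hg : IsUnit g.det) (hh : IsUnit h.det)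
    (hrow : g 1 = h 1) : ∃ b ∈ upperTriangularGL R, g = b * h := by
  refine ⟨g * h⁻¹, ⟨?_, ?_⟩, by rw [Matrix.mul_assoc, nonsing_inv_mul _ hh, mul_one]⟩
  · rw [det_mul]
    exact hg.mul (isUnit_nonsing_inv_det h hh)
  · calc (g * h⁻¹) 1 0 = (h * h⁻¹) 1 0 := by simp only [mul_apply, hrow]
      _ = 0 := by rw [mul_nonsing_inv _ hh, one_apply_ne one_ne_zero]

lemma smul_mem_diagonalModGL {u : R} (hu : IsUnit u) (hk : k ∈ diagonalModGL q) :
    u • k ∈ diagonalModGL q := by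
  obtain ⟨hdet, h01, h10⟩ := hk
  refine ⟨?_, h01.mul_left u, h10.mul_left u⟩
  rw [det_smul]
  exact (hu.pow _).mul hdet

lemma mem_doubleCoset_iff_bottom_row (hg : IsUnit g.det) (hγ : IsUnit γ.det) :
    g ∈ doubleCoset γ (upperTriangularGL R) (diagonalModGL q) ↔
      ∃ k ∈ diagonalModGL q, g 1 = γ 1 ᵥ* k := by
  rw [mem_doubleCoset]
  constructor
  · rintro ⟨b, ⟨hb, hb10⟩, k, hk, rfl⟩
    have hb11 : IsUnit (b 1 1) := by
      rw [det_fin_two, hb10, mul_zero, sub_zero] at hb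
      exact isUnit_of_mul_isUnit_right hb
    refine ⟨b 1 1 • k, smul_mem_diagonalModGL hb11 hk, ?_⟩
    have hrow : (b * γ) 1 = b 1 1 • γ 1 := by
      ext j
      simp [mul_apply, Fin.sum_univ_two, hb10]
    rw [mul_apply_eq_vecMul, hrow, smul_vecMul, vecMul_smul]
  · rintro ⟨k, hk, hrow⟩
    have hγk : IsUnit (γ * k).det := by
      rw [det_mul]
      exact hγ.mul hk.1
    obtain ⟨b, hb, hgb⟩ :=
      exists_upperTriangularGL_mul_eq hg hγk (hrow.trans (mul_apply_eq_vecMul γ k 1).symm)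
    exact ⟨b, hb, k, hk, by rw [hgb, Matrix.mul_assoc]⟩

variable [IsLocalRing R]

lemma isUnit_bottom_row_of_isUnit_det (hg : IsUnit g.det) :
    IsUnit (g 1 0) ∨ IsUnit (g 1 1) := by
  rw [det_fin_two, sub_eq_add_neg] at hg
  rcases IsLocalRing.isUnit_or_isUnit_of_isUnit_add hg with had | hbc
  · exact .inr (isUnit_of_mul_isUnit_right had)
  · exact .inl (isUnit_of_mul_isUnit_right (IsUnit.neg_iff _ |>.mp hbc))

lemma isUnit_diagonal_of_mem_diagonalModGL (hq : ¬IsUnit q) (hk : k ∈ diagonalModGL q) :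
    IsUnit (k 0 0) ∧ IsUnit (k 1 1) := by
  obtain ⟨hdet, h01, -⟩ := hk
  have hdiag : AssociatedMod q (k 0 0 * k 1 1) k.det :=
    ⟨1, isUnit_one, by
      rw [det_fin_two, one_mul, sub_sub_cancel]
      exact h01.mul_right _⟩
  exact IsUnit.mul_iff.mp ((hdiag.isUnit_iff hq).mpr hdet)

lemma exists_diagonalModGL_vecMul_eq {v w : Fin 2 → R} (hq : ¬IsUnit q)
    (hw : IsUnit (w 0) ∨ IsUnit (w 1))
    (h0 : AssociatedMod q (v 0) (w 0)) (h1 : AssociatedMod q (v 1) (w 1)) :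
    ∃ k ∈ diagonalModGL q, v = w ᵥ* k := by
  rcases hw with hw0 | hw1
  · have hv0 : IsUnit (v 0) := (h0.isUnit_iff hq).mpr hw0
    obtain ⟨s, hs, hdvd⟩ := h1
    obtain ⟨t, ht⟩ := hw0.exists_right_inv
    have htu : IsUnit t := .of_mul_eq_one_right _ ht
    refine ⟨!![t * v 0, t * (v 1 - s * w 1); 0, s], ⟨?_, ?_, ?_⟩, ?_⟩
    · simpa [det_fin_two] using ⟨⟨htu, hv0⟩, hs⟩
    · simpa using hdvd.mul_left t
    · simp
    · ext j
      fin_cases j <;> simp [vecMul, dotProduct, Fin.sum_univ_two, ← mul_assoc, ht, mul_comm s]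
  · have hv1 : IsUnit (v 1) := (h1.isUnit_iff hq).mpr hw1
    obtain ⟨s, hs, hdvd⟩ := h0
    obtain ⟨t, ht⟩ := hw1.exists_right_inv
    have htu : IsUnit t := .of_mul_eq_one_right _ ht
    refine ⟨!![s, 0; t * (v 0 - s * w 0), t * v 1], ⟨?_, ?_, ?_⟩, ?_⟩
    · simpa [det_fin_two] using ⟨hs, htu, hv1⟩
    · simp
    · simpa using hdvd.mul_left t
    · ext j
      fin_cases j <;> simp [vecMul, dotProduct, Fin.sum_univ_two, ← mul_assoc, ht, mul_comm s]

theorem mem_doubleCoset_iff_associatedMod (hq : ¬IsUnit q) (hg : IsUnit g.det)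
    (hγ : IsUnit γ.det) :
    g ∈ doubleCoset γ (upperTriangularGL R) (diagonalModGL q) ↔
      AssociatedMod q (g 1 0) (γ 1 0) ∧ AssociatedMod q (g 1 1) (γ 1 1) := by
  rw [mem_doubleCoset_iff_bottom_row hg hγ]
  constructor
  · rintro ⟨k, hk, hrow⟩
    obtain ⟨hk00, hk11⟩ := isUnit_diagonal_of_mem_diagonalModGL hq hk
    obtain ⟨-, h01, h10⟩ := hk
    have hg10 : g 1 0 - k 0 0 * γ 1 0 = γ 1 1 * k 1 0 := by
      simp only [hrow, vecMul, dotProduct, Fin.sum_univ_two]; ring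
    have hg11 : g 1 1 - k 1 1 * γ 1 1 = γ 1 0 * k 0 1 := by
      simp only [hrow, vecMul, dotProduct, Fin.sum_univ_two]; ring
    exact ⟨⟨k 0 0, hk00, hg10 ▸ h10.mul_left _⟩, ⟨k 1 1, hk11, hg11 ▸ h01.mul_left _⟩⟩
  · rintro ⟨h0, h1⟩
    exact exists_diagonalModGL_vecMul_eq hq (isUnit_bottom_row_of_isUnit_det hγ) h0 h1

end DoubleCosets

section DiscreteValuationRing

variable {R : Type*} [CommRing R] [IsDomain R] {ϖ x : R} {m e f : ℕ}

lemma AssociatedMod.le_of_pow (hϖ : Irreducible ϖ) (he : e ≤ m)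
    (hxe : AssociatedMod (ϖ ^ m) x (ϖ ^ e)) (hxf : AssociatedMod (ϖ ^ m) x (ϖ ^ f)) : e ≤ f := by
  have hdvd : ϖ ^ e ∣ ϖ ^ m := pow_dvd_pow ϖ he
  rw [← pow_dvd_pow_iff hϖ.ne_zero hϖ.not_isUnit]
  exact (hxf.dvd_iff hdvd).mp ((hxe.dvd_iff hdvd).mpr dvd_rfl)

variable [IsDiscreteValuationRing R]

lemma exists_associatedMod_pow (hϖ : Irreducible ϖ) (m : ℕ) (x : R) :
    ∃ e ≤ m, AssociatedMod (ϖ ^ m) x (ϖ ^ e) := by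
  by_cases hx : ϖ ^ m ∣ x
  · exact ⟨m, le_rfl, 1, isUnit_one, dvd_sub hx (dvd_mul_left _ _)⟩
  · have hx0 : x ≠ 0 := fun h => hx (h ▸ dvd_zero _)
    obtain ⟨e, u, rfl⟩ := IsDiscreteValuationRing.eq_unit_mul_pow_irreducible hx0 hϖ
    have he : e ≤ m := by
      by_contra! hlt
      exact hx ((pow_dvd_pow ϖ hlt.le).mul_left _)
    exact ⟨e, he, u, u.isUnit, by simp⟩

end DiscreteValuationRing

section Representatives

variable {R : Type*} [CommRing R] {m : ℕ}

/-- The representatives of the double cosets: `γᵢ` with `i = 1, …, m`, where `i : Fin m` stands for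
`γᵢ₊₁`, and `γ̃ⱼ` with `j = 0, …, m`. -/
def cosetRep (ϖ : R) (m : ℕ) : Fin m ⊕ Fin (m + 1) → Matrix (Fin 2) (Fin 2) R :=
  Sum.elim (fun i => !![1, 0; ϖ ^ ((i : ℕ) + 1), 1]) (fun j => !![0, -1; 1, ϖ ^ (j : ℕ)])

/-- The exponents `(e, f)` for which the bottom row of `cosetRep ϖ m c` is `(ϖ ^ e, ϖ ^ f)`. -/
def bottomExponents (m : ℕ) : Fin m ⊕ Fin (m + 1) → ℕ × ℕ :=
  Sum.elim (fun i => (i + 1, 0)) (fun j => (0, j))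

lemma det_cosetRep (ϖ : R) (c : Fin m ⊕ Fin (m + 1)) : (cosetRep ϖ m c).det = 1 := by
  rcases c with i | j <;> simp [cosetRep]

lemma cosetRep_one_zero (ϖ : R) (c : Fin m ⊕ Fin (m + 1)) :
    cosetRep ϖ m c 1 0 = ϖ ^ (bottomExponents m c).1 := by
  rcases c with i | j <;> simp [cosetRep, bottomExponents]

lemma cosetRep_one_one (ϖ : R) (c : Fin m ⊕ Fin (m + 1)) :
    cosetRep ϖ m c 1 1 = ϖ ^ (bottomExponents m c).2 := by
  rcases c with i | j <;> simp [cosetRep, bottomExponents]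

lemma bottomExponents_le (c : Fin m ⊕ Fin (m + 1)) :
    (bottomExponents m c).1 ≤ m ∧ (bottomExponents m c).2 ≤ m := by
  rcases c with i | j <;> simp only [bottomExponents, Sum.elim_inl, Sum.elim_inr] <;> omega

lemma bottomExponents_injective (m : ℕ) : Function.Injective (bottomExponents m) := by
  rintro (i | i) (j | j) h <;> simp_all [bottomExponents, Fin.val_inj]

lemma exists_bottomExponents_eq {e f : ℕ} (he : e ≤ m) (hf : f ≤ m) (h : e = 0 ∨ f = 0) :
    ∃ c, bottomExponents m c = (e, f) := by
  rcases e with _ | e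
  · exact ⟨.inr ⟨f, by omega⟩, rfl⟩
  · exact ⟨.inl ⟨e, he⟩, by simp_all [bottomExponents]⟩

end Representatives

section Decomposition

variable {R : Type*} [CommRing R] [IsDomain R] [IsDiscreteValuationRing R] {ϖ : R} {m : ℕ}
  {g : Matrix (Fin 2) (Fin 2) R}

lemma mem_doubleCoset_cosetRep_iff (hϖ : Irreducible ϖ) (hm : m ≠ 0) (hg : IsUnit g.det)
    (c : Fin m ⊕ Fin (m + 1)) :
    g ∈ doubleCoset (cosetRep ϖ m c) (upperTriangularGL R) (diagonalModGL (ϖ ^ m)) ↔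
      AssociatedMod (ϖ ^ m) (g 1 0) (ϖ ^ (bottomExponents m c).1) ∧
        AssociatedMod (ϖ ^ m) (g 1 1) (ϖ ^ (bottomExponents m c).2) := by
  have hq : ¬IsUnit (ϖ ^ m) := (isUnit_pow_iff hm).not.mpr hϖ.not_isUnit
  rw [mem_doubleCoset_iff_associatedMod hq hg (by simp [det_cosetRep]), cosetRep_one_zero,
    cosetRep_one_one]

lemma exists_bottomExponents_associatedMod (hϖ : Irreducible ϖ) (hm : m ≠ 0)
    (hg : IsUnit g.det) :
    ∃ c, AssociatedMod (ϖ ^ m) (g 1 0) (ϖ ^ (bottomExponents m c).1) ∧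
      AssociatedMod (ϖ ^ m) (g 1 1) (ϖ ^ (bottomExponents m c).2) := by
  obtain ⟨e, he, hge⟩ := exists_associatedMod_pow hϖ m (g 1 0)
  obtain ⟨f, hf, hgf⟩ := exists_associatedMod_pow hϖ m (g 1 1)
  have hpow_unit {n : ℕ} : IsUnit (ϖ ^ n) ↔ n = 0 :=
    isUnit_pow_iff_of_not_isUnit hϖ.not_isUnit
  have hq : ¬IsUnit (ϖ ^ m) := hpow_unit.not.mpr hm
  have hef : e = 0 ∨ f = 0 := by
    rw [← hpow_unit, ← hpow_unit, ← hge.isUnit_iff hq, ← hgf.isUnit_iff hq]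
    exact isUnit_bottom_row_of_isUnit_det hg
  obtain ⟨c, hc⟩ := exists_bottomExponents_eq he hf hef
  exact ⟨c, by rw [hc]; exact ⟨hge, hgf⟩⟩

theorem stmt_10_general (hϖ : Irreducible ϖ) (hm : m ≠ 0) (hg : IsUnit g.det) :
    ∃! c, g ∈ doubleCoset (cosetRep ϖ m c) (upperTriangularGL R) (diagonalModGL (ϖ ^ m)) := by
  simp only [mem_doubleCoset_cosetRep_iff hϖ hm hg]
  refine existsUnique_of_exists_of_unique (exists_bottomExponents_associatedMod hϖ hm hg) ?_
  rintro c c' ⟨h0, h1⟩ ⟨h0', h1'⟩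
  obtain ⟨hc0, hc1⟩ := bottomExponents_le c
  obtain ⟨hc0', hc1'⟩ := bottomExponents_le c'
  exact bottomExponents_injective m <| Prod.ext
    ((h0.le_of_pow hϖ hc0 h0').antisymm (h0'.le_of_pow hϖ hc0' h0))
    ((h1.le_of_pow hϖ hc1 h1').antisymm (h1'.le_of_pow hϖ hc1' h1))

end Decomposition

/-- Double coset decomposition: `GL₂(ℤ_p)` is the disjoint union of the double cosets
`B(ℤ_p)·γᵢ·K_H(m,m)` for `i = 1, …, m` and `B(ℤ_p)·γ̃ⱼ·K_H(m,m)` for `j = 0, …, m`,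
where `γᵢ = [[1,0],[pⁱ,1]]` and `γ̃ⱼ = [[0,−1],[1,pʲ]]`. -/
theorem stmt_10 (p : ℕ) [Fact p.Prime] (m : ℕ) (hm : 1 ≤ m) :
    ∀ g : Matrix (Fin 2) (Fin 2) ℤ_[p], IsUnit g.det →
      ∃! c : Fin m ⊕ Fin (m + 1),
        ∃ b : Matrix (Fin 2) (Fin 2) ℤ_[p], (IsUnit b.det ∧ b 1 0 = 0) ∧
        ∃ k : Matrix (Fin 2) (Fin 2) ℤ_[p],
          (IsUnit k.det ∧ (p : ℤ_[p]) ^ m ∣ k 0 1 ∧ (p : ℤ_[p]) ^ m ∣ k 1 0) ∧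
          g = b *
            (Sum.elim (fun i : Fin m => !![1, 0; (p : ℤ_[p]) ^ ((i : ℕ) + 1), 1])
              (fun j : Fin (m + 1) => !![0, -1; 1, (p : ℤ_[p]) ^ (j : ℕ)]) c) * k := by
  intro g hg
  have h := stmt_10_general PadicInt.irreducible_p (Nat.one_le_iff_ne_zero.mp hm) hg
  simp only [mem_doubleCoset] at h
  exact h
end

section
/- Let p be an odd prime, r ≥ 1 an integer, b a unit of ℤ_p, and τ = [[b, 0],[0, −b]]. Let g = [[t, x],[0, 1]] with t ∈ ℚ_p nonzero and x ∈ ℚ_p. If there exist matrices X, X' ∈ p^r M₂(ℤ_p) with τ + X = g (τ + X') g⁻¹, then either x ∈ p^r ℤ_p or v_p(t) ≤ v_p(x) − r; in either case g ∈ K(r)·D·K(r), i.e. g = k₁ d k₂ for some k₁, k₂ ∈ K(r) and some invertible diagonal matrix d over ℚ_p. -/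
/-!
Comparing the upper right entries of `A g = g B`, where `A = τ + X`, `B = τ + X'` and
`g = [[t, x], [0, 1]]`, gives `(A₀₀ - B₁₁) x = t B₀₁ - A₀₁`. The two eigenvalues of `τ` are further
apart than the perturbations are large, so `A₀₀ - B₁₁` has the norm of their difference, and the
ultrametric inequality bounds `x` by the larger of `t B₀₁` and `A₀₁`. If `A₀₁` dominates, the
unipotent part of `g` splits off on the left, otherwise on the right.
-/

open Matrix

section CongruenceDecomposition

variable {n : Type*} [DecidableEq n]

/-- The matrix `k` is entrywise within `ε` of the identity. Over `ℚ_p` with `ε = p ^ (-m)`, `m ≥ 1`,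
this is membership in the principal congruence subgroup `K(m)`: such a `k` is integral and
congruent to `1` modulo `p`, hence automatically has unit determinant. -/
def CongruentToOne {R : Type*} [SeminormedRing R] (ε : ℝ) (k : Matrix n n R) : Prop :=
  ∀ i j, ‖(k - 1) i j‖ ≤ ε

/-- The matrix `g` lies in the product set `K(ε) D K(ε)`, where `K(ε)` is the set of matrices
within `ε` of the identity and `D` is the group of invertible diagonal matrices. -/
def HasCongruenceDecomposition {K : Type*} [NormedField K] (ε : ℝ) (g : Matrix (Fin 2) (Fin 2) K) :
    Prop :=
  ∃ k₁ k₂ : Matrix (Fin 2) (Fin 2) K, ∃ d₁ d₂ : K, CongruentToOne ε k₁ ∧ CongruentToOne ε k₂ ∧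
    d₁ ≠ 0 ∧ d₂ ≠ 0 ∧ g = k₁ * !![d₁, 0; 0, d₂] * k₂

theorem congruentToOne_one {R : Type*} [SeminormedRing R] {ε : ℝ} (hε : 0 ≤ ε) :
    CongruentToOne ε (1 : Matrix n n R) := fun i j ↦ by
  simpa using hε

theorem congruentToOne_transvection {R : Type*} [SeminormedCommRing R] {ε : ℝ} {c : R}
    (hc : ‖c‖ ≤ ε) (i j : n) : CongruentToOne ε (transvection i j c) := fun k l ↦ by
  rw [transvection, add_sub_cancel_left, single_apply]
  split_ifs
  · exact hc
  · simpa using (norm_nonneg c).trans hc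

theorem transvection_mul_diagonal_fin_two {R : Type*} [CommRing R] (c d₁ d₂ : R) :
    transvection 0 1 c * !![d₁, 0; 0, d₂] = !![d₁, c * d₂; 0, d₂] := by
  ext i j
  fin_cases i <;> fin_cases j <;> simp [transvection, add_mul]

theorem diagonal_mul_transvection_fin_two {R : Type*} [CommRing R] (c d₁ d₂ : R) :
    !![d₁, 0; 0, d₂] * transvection 0 1 c = !![d₁, d₁ * c; 0, d₂] := by
  ext i j
  fin_cases i <;> fin_cases j <;> simp [transvection, mul_apply, one_apply]

theorem hasCongruenceDecomposition_of_norm_le {K : Type*} [NormedField K] {t x : K} {ε : ℝ}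
    (ht : t ≠ 0) (hx : ‖x‖ ≤ ε ∨ ‖x‖ ≤ ‖t‖ * ε) :
    HasCongruenceDecomposition ε !![t, x; 0, 1] := by
  have ht_pos : 0 < ‖t‖ := norm_pos_iff.mpr ht
  rcases hx with hx | hx
  · have hε : 0 ≤ ε := (norm_nonneg x).trans hx
    refine ⟨transvection 0 1 x, 1, t, 1, congruentToOne_transvection hx 0 1,
      congruentToOne_one hε, ht, one_ne_zero, ?_⟩
    rw [mul_one, transvection_mul_diagonal_fin_two, mul_one]
  · have hxt : ‖x / t‖ ≤ ε := by rwa [norm_div, div_le_iff₀' ht_pos]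
    have hε : 0 ≤ ε := (norm_nonneg _).trans hxt
    refine ⟨1, transvection 0 1 (x / t), t, 1, congruentToOne_one hε,
      congruentToOne_transvection hxt 0 1, ht, one_ne_zero, ?_⟩
    rw [one_mul, diagonal_mul_transvection_fin_two, mul_div_cancel₀ x ht]

end CongruenceDecomposition

section Conjugation

theorem sub_mul_eq_of_eq_conj {R : Type*} [CommRing R] {t x : R} (ht : IsUnit t)
    {A B : Matrix (Fin 2) (Fin 2) R} (hAB : A = !![t, x; 0, 1] * B * (!![t, x; 0, 1])⁻¹) :
    (A 0 0 - B 1 1) * x = t * B 0 1 - A 0 1 := by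
  have hdet : IsUnit (!![t, x; 0, 1] : Matrix (Fin 2) (Fin 2) R).det := by
    simpa [det_fin_two] using ht
  have hcomm : A * !![t, x; 0, 1] = !![t, x; 0, 1] * B := by
    rw [hAB, nonsing_inv_mul_cancel_right _ _ hdet]
  have hentry : A 0 0 * x + A 0 1 = t * B 0 1 + x * B 1 1 := by
    simpa [mul_apply, Fin.sum_univ_two] using congrFun₂ hcomm 0 1
  linear_combination hentry

theorem norm_sub_le_max {E : Type*} [SeminormedAddGroup E] [IsUltrametricDist E] (u v : E) :
    ‖u - v‖ ≤ max ‖u‖ ‖v‖ := by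
  simpa [sub_eq_add_neg] using IsUltrametricDist.norm_add_le_max u (-v)

theorem norm_add_sub_add_eq {E : Type*} [SeminormedAddCommGroup E] [IsUltrametricDist E]
    {a d u v : E} {ε : ℝ} (hu : ‖u‖ ≤ ε) (hv : ‖v‖ ≤ ε) (hε : ε < ‖a - d‖) :
    ‖(a + u) - (d + v)‖ = ‖a - d‖ := by
  have huv : ‖u - v‖ < ‖a - d‖ :=
    (norm_sub_le_max u v).trans_lt ((max_le hu hv).trans_lt hε)
  rw [add_sub_add_comm, IsUltrametricDist.norm_add_eq_max_of_norm_ne_norm huv.ne',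
    max_eq_left huv.le]

variable {K : Type*} [NormedField K] [IsUltrametricDist K]

theorem norm_le_or_norm_le_of_mul_eq {c t u v x : K} {ε : ℝ} (hc : 0 < ‖c‖) (hu : ‖u‖ ≤ ε)
    (hv : ‖v‖ ≤ ε) (h : c * x = t * u - v) :
    ‖x‖ ≤ ε / ‖c‖ ∨ ‖x‖ ≤ ‖t‖ * (ε / ‖c‖) := by
  have hmax : ‖x‖ * ‖c‖ ≤ max (‖t‖ * ‖u‖) ‖v‖ := by
    rw [mul_comm, ← norm_mul, h, ← norm_mul]
    exact norm_sub_le_max _ _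
  rw [← mul_div_assoc, le_div_iff₀ hc, le_div_iff₀ hc]
  rcases le_max_iff.mp hmax with htu | hle
  · exact .inr (htu.trans (by gcongr))
  · exact .inl (hle.trans hv)

theorem stmt_11_general {a d t x : K} {ε : ℝ} (ht : t ≠ 0) (hε : ε < ‖a - d‖)
    {X X' : Matrix (Fin 2) (Fin 2) K} (hX : ∀ i j, ‖X i j‖ ≤ ε) (hX' : ∀ i j, ‖X' i j‖ ≤ ε)
    (heq : !![a, 0; 0, d] + X =
      !![t, x; 0, 1] * (!![a, 0; 0, d] + X') * (!![t, x; 0, 1])⁻¹) :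
    (‖x‖ ≤ ε / ‖a - d‖ ∨ ‖x‖ ≤ ‖t‖ * (ε / ‖a - d‖)) ∧
      HasCongruenceDecomposition (ε / ‖a - d‖) !![t, x; 0, 1] := by
  have hentry : ((a + X 0 0) - (d + X' 1 1)) * x = t * X' 0 1 - X 0 1 := by
    simpa using sub_mul_eq_of_eq_conj ht.isUnit heq
  have hnorm : ‖(a + X 0 0) - (d + X' 1 1)‖ = ‖a - d‖ :=
    norm_add_sub_add_eq (hX 0 0) (hX' 1 1) hε
  have hpos : 0 < ‖a - d‖ := ((norm_nonneg _).trans (hX 0 0)).trans_lt hε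
  have hx := norm_le_or_norm_le_of_mul_eq (hnorm ▸ hpos) (hX' 0 1) (hX 0 1) hentry
  rw [hnorm] at hx
  exact ⟨hx, hasCongruenceDecomposition_of_norm_le ht hx⟩

end Conjugation

section Padic

variable {p : ℕ} [Fact p.Prime]

theorem padic_norm_le_norm_mul_zpow_neg_iff {t x : ℚ_[p]} (ht : t ≠ 0) (hx : x ≠ 0) (m : ℤ) :
    ‖x‖ ≤ ‖t‖ * (p : ℝ) ^ (-m) ↔ t.valuation ≤ x.valuation - m := by
  have hp : (1 : ℝ) < p := mod_cast (Fact.out : p.Prime).one_lt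
  rw [Padic.norm_eq_zpow_neg_valuation hx, Padic.norm_eq_zpow_neg_valuation ht,
    ← zpow_add₀ (by positivity), zpow_le_zpow_iff_right₀ hp]
  omega

theorem padic_norm_sub_neg_eq_one (hp : Odd p) {b : ℤ_[p]} (hb : IsUnit b) :
    ‖(b : ℚ_[p]) - -(b : ℚ_[p])‖ = 1 := by
  have htwo : ‖((2 : ℕ) : ℚ_[p])‖ = 1 :=
    Padic.norm_natCast_eq_one_iff.mpr (Nat.coprime_two_right.mpr hp)
  have hb_norm : ‖(b : ℚ_[p])‖ = 1 := PadicInt.isUnit_iff.mp hb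
  rw [sub_neg_eq_add, ← two_mul, norm_mul, hb_norm, mul_one]
  exact_mod_cast htwo

end Padic

/-- If `τ + X = g (τ + X') g⁻¹` with `τ = diag(b, −b)`, `b` a unit of `ℤ_p`,
`X, X' ∈ p^r M₂(ℤ_p)` and `g = [[t, x],[0, 1]]`, then either `x ∈ p^r ℤ_p` or
`v_p(t) ≤ v_p(x) − r`; in either case `g ∈ K(r)·D·K(r)`. -/
theorem stmt_11 (p : ℕ) [Fact p.Prime] (hp : Odd p) (r : ℕ) (hr : 1 ≤ r)
    (b : ℤ_[p]) (hb : IsUnit b)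
    (t x : ℚ_[p]) (ht : t ≠ 0)
    (X X' : Matrix (Fin 2) (Fin 2) ℚ_[p])
    (hX : ∀ i j, ‖X i j‖ ≤ (p : ℝ) ^ (-(r : ℤ)))
    (hX' : ∀ i j, ‖X' i j‖ ≤ (p : ℝ) ^ (-(r : ℤ)))
    (heq : !![(b : ℚ_[p]), 0; 0, -(b : ℚ_[p])] + X =
      !![t, x; 0, 1] * (!![(b : ℚ_[p]), 0; 0, -(b : ℚ_[p])] + X') * (!![t, x; 0, 1])⁻¹) :
    (‖x‖ ≤ (p : ℝ) ^ (-(r : ℤ)) ∨ t.valuation ≤ x.valuation - (r : ℤ)) ∧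
    ∃ k₁ k₂ : Matrix (Fin 2) (Fin 2) ℚ_[p], ∃ d₁ d₂ : ℚ_[p],
      (∀ i j, ‖(k₁ - 1) i j‖ ≤ (p : ℝ) ^ (-(r : ℤ))) ∧
      (∀ i j, ‖(k₂ - 1) i j‖ ≤ (p : ℝ) ^ (-(r : ℤ))) ∧
      d₁ ≠ 0 ∧ d₂ ≠ 0 ∧ !![t, x; 0, 1] = k₁ * !![d₁, 0; 0, d₂] * k₂ := by
  have hgap : ‖(b : ℚ_[p]) - -(b : ℚ_[p])‖ = 1 := padic_norm_sub_neg_eq_one hp hb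
  have hε : (p : ℝ) ^ (-(r : ℤ)) < ‖(b : ℚ_[p]) - -(b : ℚ_[p])‖ :=
    (zpow_lt_one_of_neg₀ (mod_cast (Fact.out : p.Prime).one_lt) (by omega)).trans_eq hgap.symm
  have hgen := stmt_11_general ht hε hX hX' heq
  rw [hgap, div_one] at hgen
  refine ⟨?_, hgen.2⟩
  rcases eq_or_ne x 0 with rfl | hx
  · exact .inl (by simp)
  · exact hgen.1.imp_right (padic_norm_le_norm_mul_zpow_neg_iff ht hx r).mp
end

section
/- Let p be a prime and let n ≥ 1 and 0 ≤ l ≤ n be integers. Let c₂, c₀ ∈ ℤ_p with c₂ of p-adic valuation exactly l (i.e. c₂ = p^l u with u a unit of ℤ_p). Then the number of residues α ∈ ℤ/p^nℤ satisfying α ≡ 1 (mod p) and c₂ α² ≡ c₀ (mod p^n) is at most 2·p^{(n+l)/2}. -/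
/-!
Any two solutions `α`, `β` satisfy `p ^ l * ((α - β) * (α + β)) = 0` modulo `p ^ n`. The `n - l`
factors `p` that this leaves for `(α - β) * (α + β)` are shared between the two factors, so one of
them is divisible by `p ^ k` with `k = ⌈(n - l) / 2⌉`. Hence all solutions lie in the two classes
`±β` modulo `p ^ k`, each of which contains `p ^ (n - k) = p ^ ⌊(n + l) / 2⌋` residues modulo
`p ^ n`.
-/

lemma pow_dvd_or_pow_dvd_of_prime_of_pow_dvd_mul {M : Type*} [CommMonoidWithZero M]
    [IsCancelMulZero M] {p a b : M} (hp : Prime p) {i j m : ℕ} (hij : i + j ≤ m + 1)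
    (h : p ^ m ∣ a * b) : p ^ i ∣ a ∨ p ^ j ∣ b := by
  by_contra! hab
  rw [← emultiplicity_lt_iff_not_dvd, ← emultiplicity_lt_iff_not_dvd] at hab
  rw [pow_dvd_iff_le_emultiplicity, emultiplicity_mul hp] at h
  obtain ⟨hva, hvb⟩ := hab
  lift emultiplicity p a to ℕ using hva.ne_top with va
  lift emultiplicity p b to ℕ using hvb.ne_top with vb
  norm_cast at hva hvb h
  omega

lemma card_fiber_mul_card_of_surjective {G H : Type*} [AddGroup G] [AddGroup H] {f : G →+ H}
    (hf : Function.Surjective f) (h : H) :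
    Nat.card (f ⁻¹' {h}) * Nat.card H = Nat.card G := by
  rw [Nat.card_congr (AddMonoidHom.fiberEquivKerOfSurjective hf h), ← f.ker.card_mul_index,
    AddSubgroup.index_ker, AddMonoidHom.range_eq_top.mpr hf, AddSubgroup.card_top]

lemma ncard_zmod_castHom_fiber {m n : ℕ} [NeZero m] (h : m ∣ n) (b : ZMod m) :
    (ZMod.castHom h (ZMod m) ⁻¹' {b}).ncard = n / m := by
  have hcard := card_fiber_mul_card_of_surjective
    (f := (ZMod.castHom h (ZMod m)).toAddMonoidHom) (ZMod.castHom_surjective h) b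
  rw [Nat.card_zmod, Nat.card_zmod] at hcard
  exact Nat.eq_div_of_mul_eq_left (NeZero.ne m) hcard

section PrimePower

variable {p : ℕ} [Fact p.Prime] {n l : ℕ}

lemma castHom_eq_zero_or_castHom_eq_zero_of_pow_mul_eq_zero {i j : ℕ} (hi : i ≤ n) (hj : j ≤ n)
    (hij : l + i + j ≤ n + 1) {a b : ZMod (p ^ n)} (h : (p : ZMod (p ^ n)) ^ l * (a * b) = 0) :
    ZMod.castHom (pow_dvd_pow p hi) (ZMod (p ^ i)) a = 0 ∨
      ZMod.castHom (pow_dvd_pow p hj) (ZMod (p ^ j)) b = 0 := by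
  have hp : Prime (p : ℤ) := Nat.prime_iff_prime_int.mp Fact.out
  obtain ⟨x, rfl⟩ := ZMod.intCast_surjective a
  obtain ⟨y, rfl⟩ := ZMod.intCast_surjective b
  have hdvd : (p : ℤ) ^ n ∣ p ^ l * x * y := by
    rw [← Nat.cast_pow, ← ZMod.intCast_zmod_eq_zero_iff_dvd]
    push_cast
    rw [mul_assoc, h]
  simp only [map_intCast, ZMod.intCast_zmod_eq_zero_iff_dvd, Nat.cast_pow]
  refine (pow_dvd_or_pow_dvd_of_prime_of_pow_dvd_mul hp hij hdvd).imp_left fun hx ↦ ?_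
  rwa [pow_add, mul_dvd_mul_iff_left (pow_ne_zero l hp.ne_zero)] at hx

lemma castHom_eq_or_eq_neg_of_pow_mul_sq_eq {k : ℕ} (hk : k ≤ n) (hkl : l + k + k ≤ n + 1)
    {u : ZMod (p ^ n)} (hu : IsUnit u) {α β : ZMod (p ^ n)}
    (h : p ^ l * u * α ^ 2 = p ^ l * u * β ^ 2) :
    ZMod.castHom (pow_dvd_pow p hk) (ZMod (p ^ k)) α =
        ZMod.castHom (pow_dvd_pow p hk) (ZMod (p ^ k)) β ∨
      ZMod.castHom (pow_dvd_pow p hk) (ZMod (p ^ k)) α =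
        -ZMod.castHom (pow_dvd_pow p hk) (ZMod (p ^ k)) β := by
  have hfactor : (p : ZMod (p ^ n)) ^ l * ((α - β) * (α + β)) = 0 :=
    hu.mul_left_cancel (by linear_combination h)
  simpa only [map_sub, map_add, sub_eq_zero, add_eq_zero_iff_eq_neg] using
    castHom_eq_zero_or_castHom_eq_zero_of_pow_mul_eq_zero hk hk hkl hfactor

lemma ncard_pow_mul_sq_eq_le (hl : l ≤ n) {u : ZMod (p ^ n)} (hu : IsUnit u) (c : ZMod (p ^ n)) :
    {α : ZMod (p ^ n) | p ^ l * u * α ^ 2 = c}.ncard ≤ 2 * p ^ ((n + l) / 2) := by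
  obtain hempty | ⟨β, hβ⟩ := {α : ZMod (p ^ n) | p ^ l * u * α ^ 2 = c}.eq_empty_or_nonempty
  · simp [hempty]
  obtain ⟨k, hk⟩ : ∃ k, k + (n + l) / 2 = n := ⟨n - (n + l) / 2, by omega⟩
  have hkn : k ≤ n := by omega
  set f := ZMod.castHom (pow_dvd_pow p hkn) (ZMod (p ^ k))
  have hfiber (b : ZMod (p ^ k)) : (f ⁻¹' {b}).ncard = p ^ ((n + l) / 2) := by
    rw [ncard_zmod_castHom_fiber, Nat.pow_div hkn (Nat.Prime.pos Fact.out)]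
    congr 1
    omega
  calc {α : ZMod (p ^ n) | p ^ l * u * α ^ 2 = c}.ncard
      ≤ (f ⁻¹' {f β} ∪ f ⁻¹' {-f β}).ncard := Set.ncard_le_ncard fun α hα ↦
        castHom_eq_or_eq_neg_of_pow_mul_sq_eq hkn (by omega) hu (hα.trans hβ.symm)
    _ ≤ (f ⁻¹' {f β}).ncard + (f ⁻¹' {-f β}).ncard := Set.ncard_union_le _ _
    _ = 2 * p ^ ((n + l) / 2) := by rw [hfiber, hfiber, two_mul]

end PrimePower

theorem stmt_12_general (p : ℕ) [Fact p.Prime] (n l : ℕ) (hl : l ≤ n) (c₂ c₀ : ℤ_[p])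
    (hc₂ : ∃ u : ℤ_[p]ˣ, c₂ = (p : ℤ_[p]) ^ l * (u : ℤ_[p])) :
    (Nat.card {α : ZMod (p ^ n) |
        PadicInt.toZModPow n c₂ * α ^ 2 = PadicInt.toZModPow n c₀} : ℝ) ≤
      2 * (p : ℝ) ^ (((n : ℝ) + (l : ℝ)) / 2) := by
  obtain ⟨u, rfl⟩ := hc₂
  have hp : (1 : ℝ) ≤ p := mod_cast Nat.Prime.one_le Fact.out
  have hfloor : (((n + l) / 2 : ℕ) : ℝ) ≤ ((n : ℝ) + l) / 2 := mod_cast Nat.cast_div_le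
  have hcount := ncard_pow_mul_sq_eq_le hl (u.isUnit.map (PadicInt.toZModPow n))
    (PadicInt.toZModPow n c₀)
  rw [map_mul, map_pow, map_natCast, Nat.card_coe_set_eq]
  calc _ ≤ 2 * (p : ℝ) ^ ((n + l) / 2) := mod_cast hcount
    _ = 2 * (p : ℝ) ^ (((n + l) / 2 : ℕ) : ℝ) := by rw [Real.rpow_natCast]
    _ ≤ 2 * (p : ℝ) ^ (((n : ℝ) + l) / 2) := by gcongr

/-- The number of residues `α ∈ ℤ/p^nℤ` with `α ≡ 1 (mod p)` and `c₂ α² ≡ c₀ (mod p^n)`,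
where `v_p(c₂) = l ≤ n`, is at most `2·p^((n+l)/2)`. -/
theorem stmt_12 (p : ℕ) [Fact p.Prime] (n l : ℕ) (hn : 1 ≤ n) (hl : l ≤ n)
    (c₂ c₀ : ℤ_[p]) (hc₂ : ∃ u : ℤ_[p]ˣ, c₂ = (p : ℤ_[p]) ^ l * (u : ℤ_[p])) :
    (Nat.card {α : ZMod (p ^ n) |
        ZMod.castHom (dvd_pow_self p (Nat.one_le_iff_ne_zero.mp hn)) (ZMod p) α = 1 ∧
        PadicInt.toZModPow n c₂ * α ^ 2 = PadicInt.toZModPow n c₀} : ℝ) ≤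
      2 * (p : ℝ) ^ (((n : ℝ) + (l : ℝ)) / 2) := by
  exact (Nat.cast_le.mpr (Nat.card_mono (Set.toFinite _) fun _ hα ↦ hα.2)).trans
    (stmt_12_general p n l hl c₂ c₀ hc₂)
end

section
/- Let p be a prime, n ≥ 1 an integer, and g = [[t, u],[v, w]] ∈ GL₂(ℤ_p). Define l ∈ ℕ by: l = min(2n + v_p(v), 4n) if w is a unit of ℤ_p, and l = max(0, 2n − v_p(w)) if v_p(w) > 0 (in which case v is necessarily a unit); and define t₀ = −2n − 2·min(2n, v_p(v)) (with the convention v_p(0) = +∞). Then there exist a scalar λ ∈ ℚ_p^×, x ∈ ℚ_p, y ∈ ℚ_p^×, and k ∈ GL₂(ℤ_p) such that g·[[p^{2n}, 0],[0, 1]] = λ·[[1, x],[0, 1]]·[[y, 0],[0, 1]]·k, with min(v_p(k₂₁), 4n) = l and v_p(y) = t₀ + 2l, where k₂₁ is the lower-left entry of k. -/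
open scoped Classical

/-- The `p`-adic valuation of an element of `ℤ_p`, valued in `ℕ∞`, with `v_p(0) = ⊤`. -/
noncomputable def padicValE (p : ℕ) [Fact p.Prime] (x : ℤ_[p]) : ℕ∞ :=
  if x = 0 then ⊤ else ((x.valuation : ℕ) : ℕ∞)

/-!
Write `n(x) = [[1, x], [0, 1]]` and `a(y) = [[y, 0], [0, 1]]`; any exponent `m` may replace `2n`.
The bottom row of `λ·n(x)·a(y)·k` is `λ` times the bottom row of `k`, which is primitive. So take
for `λ` the entry of larger norm in the bottom row `(p ^ m * v, w)` of `g·a(p ^ m)`, and complete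
the quotient row to a matrix `k` of determinant one. As `(v, w)` is primitive, `λ` has valuation
`min m (v_p w)`; hence `v_p(k₂₁) = m + v_p(v) - min m (v_p w)`, and comparing determinants gives
`v_p(y) = m - 2 * min m (v_p w)`. One of `v_p v`, `v_p w` vanishes, so that both cases of the
definition of `l` read `l = m + min m (v_p v) - min m (v_p w)`.
-/

section Iwasawa

variable {K : Type*} [NormedField K]

/-- `M = lam · n(x) · a(y) · k` with `k` in `GL₂(𝒪)`, where `𝒪` is the closed unit ball of `K` (a
ring when `K` is nonarchimedean). Membership of `k` is expressed by bounding the norms of its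
entries and asking that its determinant have norm one. -/
structure IsIwasawaDecomposition (M : Matrix (Fin 2) (Fin 2) K) (lam : Kˣ) (x : K) (y : Kˣ)
    (k : Matrix (Fin 2) (Fin 2) K) : Prop where
  norm_apply_le_one : ∀ i j, ‖k i j‖ ≤ 1
  norm_det_eq_one : ‖k.det‖ = 1
  eq_smul : M = (lam : K) • (!![1, x; 0, 1] * !![(y : K), 0; 0, 1] * k)

namespace IsIwasawaDecomposition

variable {M k : Matrix (Fin 2) (Fin 2) K} {lam y : Kˣ} {x : K}

lemma apply_one_zero (h : IsIwasawaDecomposition M lam x y k) : M 1 0 = lam * k 1 0 := by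
  rw [h.eq_smul]
  simp [Matrix.vecMul, dotProduct, Fin.sum_univ_two]

lemma det_eq (h : IsIwasawaDecomposition M lam x y k) :
    M.det = (lam : K) ^ 2 * (y : K) * k.det := by
  rw [h.eq_smul, Matrix.det_smul, Matrix.det_mul, Matrix.det_mul]
  simp [mul_assoc]

end IsIwasawaDecomposition

variable {a b c d : K}

lemma exists_isIwasawaDecomposition_of_norm_le (hdet : a * d - b * c ≠ 0) (hcd : ‖c‖ ≤ ‖d‖) :
    ∃ lam x y k, IsIwasawaDecomposition !![a, b; c, d] lam x y k ∧ (lam : K) = d := by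
  have hd : d ≠ 0 := by
    rintro rfl
    simp [norm_le_zero_iff.1 (hcd.trans_eq norm_zero)] at hdet
  refine ⟨Units.mk0 d hd, b / d, Units.mk0 _ (div_ne_zero hdet (pow_ne_zero 2 hd)),
    !![1, 0; c / d, 1], ⟨fun i j => ?_, by simp, ?_⟩, rfl⟩
  · fin_cases i <;> fin_cases j <;> simp [div_le_one_of_le₀ hcd]
  · simp only [Units.val_mk0, Matrix.mul_fin_two, Matrix.smul_of, Matrix.smul_cons, smul_eq_mul,
      Matrix.smul_empty]
    congr! 6 <;> field

lemma exists_isIwasawaDecomposition_of_norm_ge (hdet : a * d - b * c ≠ 0) (hdc : ‖d‖ ≤ ‖c‖) :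
    ∃ lam x y k, IsIwasawaDecomposition !![a, b; c, d] lam x y k ∧ (lam : K) = c := by
  have hc : c ≠ 0 := by
    rintro rfl
    simp [norm_le_zero_iff.1 (hdc.trans_eq norm_zero)] at hdet
  refine ⟨Units.mk0 c hc, a / c, Units.mk0 _ (div_ne_zero hdet (pow_ne_zero 2 hc)),
    !![0, -1; 1, d / c], ⟨fun i j => ?_, by simp, ?_⟩, rfl⟩
  · fin_cases i <;> fin_cases j <;> simp [div_le_one_of_le₀ hdc]
  · simp only [Units.val_mk0, Matrix.mul_fin_two, Matrix.smul_of, Matrix.smul_cons, smul_eq_mul,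
      Matrix.smul_empty]
    congr! 6 <;> field

theorem exists_isIwasawaDecomposition (hdet : a * d - b * c ≠ 0) :
    ∃ lam x y k, IsIwasawaDecomposition !![a, b; c, d] lam x y k ∧
      ‖(lam : K)‖ = max ‖c‖ ‖d‖ := by
  rcases le_total ‖c‖ ‖d‖ with hcd | hdc
  · obtain ⟨lam, x, y, k, h, rfl⟩ := exists_isIwasawaDecomposition_of_norm_le hdet hcd
    exact ⟨lam, x, y, k, h, (max_eq_right hcd).symm⟩
  · obtain ⟨lam, x, y, k, h, rfl⟩ := exists_isIwasawaDecomposition_of_norm_ge hdet hdc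
    exact ⟨lam, x, y, k, h, (max_eq_left hdc).symm⟩

end Iwasawa

lemma isUnit_or_isUnit_of_isUnit_det {R : Type*} [CommRing R] [IsLocalRing R] {t u v w : R}
    (h : IsUnit (Matrix.det !![t, u; v, w])) : IsUnit v ∨ IsUnit w := by
  rw [Matrix.det_fin_two_of, sub_eq_add_neg] at h
  rcases IsLocalRing.isUnit_or_isUnit_of_isUnit_add h with h | h
  · exact .inr (isUnit_of_mul_isUnit_right h)
  · exact .inl (isUnit_of_mul_isUnit_right ((IsUnit.neg_iff _).1 h))

lemma toNat_min_add_eq_add_toNat_min (m : ℕ) (a : ℕ∞) :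
    (min ((m : ℕ∞) + a) ((2 * m : ℕ) : ℕ∞)).toNat = m + (min (m : ℕ∞) a).toNat := by
  rw [two_mul, Nat.cast_add, min_add_add_left, min_comm,
    ENat.toNat_add (ENat.natCast_ne_top m) (by simp), ENat.toNat_natCast]

lemma toNat_sub_eq_sub_toNat_min (m : ℕ) (a : ℕ∞) :
    ((m : ℕ∞) - a).toNat = m - (min (m : ℕ∞) a).toNat := by
  rw [← tsub_min, ENat.toNat_sub (by simp), ENat.toNat_natCast]

section Padic

variable {p : ℕ} [Fact p.Prime]

lemma valuation_eq_of_norm_eq_zpow_neg {x : ℚ_[p]} {n : ℤ} (h : ‖x‖ = (p : ℝ) ^ (-n)) :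
    x.valuation = n := by
  have one_lt_p : (1 : ℝ) < p := mod_cast (Fact.out : p.Prime).one_lt
  have hx : x ≠ 0 := norm_pos_iff.1 (h ▸ by positivity)
  rw [Padic.norm_eq_zpow_neg_valuation hx] at h
  exact neg_injective (zpow_right_injective₀ (by positivity) one_lt_p.ne' h)

lemma valuation_eq_zero_of_isUnit {x : ℤ_[p]} (hx : IsUnit x) : x.valuation = 0 := by
  have h : (x : ℚ_[p]).valuation = 0 :=
    valuation_eq_of_norm_eq_zpow_neg (by simpa using PadicInt.isUnit_iff.1 hx)
  simpa using h

lemma IsIwasawaDecomposition.valuation_det {M k : Matrix (Fin 2) (Fin 2) ℚ_[p]} {lam y : ℚ_[p]ˣ}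
    {x : ℚ_[p]} (h : IsIwasawaDecomposition M lam x y k) :
    M.det.valuation = 2 * (lam : ℚ_[p]).valuation + (y : ℚ_[p]).valuation := by
  have hk : k.det.valuation = 0 := valuation_eq_of_norm_eq_zpow_neg (by simp [h.norm_det_eq_one])
  have hk0 : k.det ≠ 0 := norm_ne_zero_iff.1 (by simp [h.norm_det_eq_one])
  rw [h.det_eq, Padic.valuation_mul (by simp) hk0, Padic.valuation_mul (by simp) y.ne_zero,
    Padic.valuation_pow, hk, add_zero, Nat.cast_ofNat]

/-- The truncated valuation `min(m, v_p(x))`, in terms of which `l` and `t₀` are computed. Being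
truncated, it never meets the junk value of `ENat.toNat` at `⊤`: it equals `m` at `x = 0`. -/
noncomputable def truncVal (m : ℕ) (x : ℤ_[p]) : ℕ :=
  (min (m : ℕ∞) (padicValE p x)).toNat

variable (m : ℕ) {v w x : ℤ_[p]}

@[simp]
lemma truncVal_zero : truncVal m (0 : ℤ_[p]) = m := by
  simp [truncVal, padicValE]

lemma truncVal_of_ne_zero (hx : x ≠ 0) : truncVal m x = min m x.valuation := by
  rw [truncVal, padicValE, if_neg hx]
  norm_cast

lemma truncVal_of_isUnit (hx : IsUnit x) : truncVal m x = 0 := by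
  simp [truncVal_of_ne_zero m hx.ne_zero, valuation_eq_zero_of_isUnit hx]

lemma truncVal_le (x : ℤ_[p]) : truncVal m x ≤ m :=
  ENat.toNat_le_of_le_natCast (min_le_left _ _)

lemma max_zpow_norm_eq_zpow_truncVal (x : ℤ_[p]) :
    max ((p : ℝ) ^ (-m : ℤ)) ‖x‖ = (p : ℝ) ^ (-truncVal m x : ℤ) := by
  rcases eq_or_ne x 0 with rfl | hx
  · simp
  · have one_lt_p : (1 : ℝ) < p := mod_cast (Fact.out : p.Prime).one_lt
    rw [truncVal_of_ne_zero m hx, PadicInt.norm_eq_zpow_neg_valuation hx, Nat.cast_min,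
      ← max_neg_neg, (zpow_right_strictMono₀ one_lt_p).monotone.map_max]

lemma max_norm_mul_pow_eq_zpow_truncVal (h : IsUnit v ∨ IsUnit w) :
    max ‖(v : ℚ_[p]) * (p : ℚ_[p]) ^ m‖ ‖(w : ℚ_[p])‖ = (p : ℝ) ^ (-truncVal m w : ℤ) := by
  rw [← max_zpow_norm_eq_zpow_truncVal, norm_mul, Padic.norm_p_pow,
    PadicInt.padic_norm_e_of_padicInt, PadicInt.padic_norm_e_of_padicInt]
  rcases h with hv | hw
  · rw [PadicInt.isUnit_iff.1 hv, one_mul]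
  · have pow_le_one : (p : ℝ) ^ (-m : ℤ) ≤ 1 := by
      simpa using PadicInt.norm_le_one ((p : ℤ_[p]) ^ m)
    have mul_le_one : ‖v‖ * (p : ℝ) ^ (-m : ℤ) ≤ 1 :=
      mul_le_one₀ v.norm_le_one (by positivity) pow_le_one
    rw [PadicInt.isUnit_iff.1 hw, max_eq_right pow_le_one, max_eq_right mul_le_one]

lemma ite_isUnit_eq_add_truncVal_sub_truncVal (h : IsUnit v ∨ IsUnit w) :
    (if IsUnit w then (min ((m : ℕ∞) + padicValE p v) ((2 * m : ℕ) : ℕ∞)).toNat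
      else ((m : ℕ∞) - padicValE p w).toNat) = m + truncVal m v - truncVal m w := by
  rw [toNat_min_add_eq_add_toNat_min, toNat_sub_eq_sub_toNat_min, ← truncVal, ← truncVal]
  split_ifs with hw
  · simp [truncVal_of_isUnit m hw]
  · simp [truncVal_of_isUnit m (h.resolve_right hw)]

lemma min_valuation_eq_add_truncVal_sub_truncVal {lam r : ℚ_[p]}
    (h : IsUnit v ∨ IsUnit w) (hlam0 : lam ≠ 0) (hlam : lam.valuation = truncVal m w)
    (hr : (v : ℚ_[p]) * (p : ℚ_[p]) ^ m = lam * r) :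
    min (if r = 0 then (⊤ : WithTop ℤ) else ((r.valuation : ℤ) : WithTop ℤ))
      (((2 * m : ℕ) : ℤ) : WithTop ℤ) =
        (((m + truncVal m v - truncVal m w : ℕ) : ℤ) : WithTop ℤ) := by
  have hp : (p : ℚ_[p]) ^ m ≠ 0 := pow_ne_zero m (NeZero.ne _)
  rcases eq_or_ne v 0 with rfl | hv
  · have hw : IsUnit w := h.resolve_left not_isUnit_zero
    have hr0 : r = 0 := by simpa [hlam0] using hr.symm
    simp [hr0, truncVal_of_isUnit m hw, two_mul]
  · have hv' : (v : ℚ_[p]) ≠ 0 := PadicInt.coe_ne_zero.2 hv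
    have hr0 : r ≠ 0 := right_ne_zero_of_mul (hr ▸ mul_ne_zero hv' hp)
    have hval : (v.valuation : ℤ) + m = truncVal m w + r.valuation := by
      simpa [Padic.valuation_mul, hv', hp, hlam0, hr0, hlam] using congrArg Padic.valuation hr
    have hunit : v.valuation = 0 ∨ truncVal m w = 0 :=
      h.imp valuation_eq_zero_of_isUnit (truncVal_of_isUnit m)
    have hle := truncVal_le m w
    have hv_trunc := truncVal_of_ne_zero m hv
    rw [if_neg hr0]
    norm_cast
    omega

lemma norm_det_mul_pow_eq_zpow {t u v w : ℤ_[p]} (hdet : IsUnit (Matrix.det !![t, u; v, w])) :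
    ‖(t : ℚ_[p]) * (p : ℚ_[p]) ^ m * w - u * (v * (p : ℚ_[p]) ^ m)‖ = (p : ℝ) ^ (-m : ℤ) := by
  have hg : ‖(t : ℚ_[p]) * w - u * v‖ = 1 := by
    simpa [PadicInt.norm_def, Matrix.det_fin_two_of] using PadicInt.isUnit_iff.1 hdet
  calc ‖(t : ℚ_[p]) * (p : ℚ_[p]) ^ m * w - u * (v * (p : ℚ_[p]) ^ m)‖
      = ‖((t : ℚ_[p]) * w - u * v) * (p : ℚ_[p]) ^ m‖ := by ring_nf
    _ = (p : ℝ) ^ (-m : ℤ) := by rw [norm_mul, hg, one_mul, Padic.norm_p_pow]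

end Padic

theorem stmt_13_general (p : ℕ) [Fact p.Prime] (m : ℕ)
    (t u v w : ℤ_[p]) (hdet : IsUnit (Matrix.det !![t, u; v, w]))
    (l : ℕ)
    (hl : l = if IsUnit w
      then (min ((m : ℕ∞) + padicValE p v) ((2 * m : ℕ) : ℕ∞)).toNat
      else ((m : ℕ∞) - padicValE p w).toNat)
    (t₀ : ℤ)
    (ht₀ : t₀ = -(m : ℤ) - 2 * ((min (m : ℕ∞) (padicValE p v)).toNat : ℤ)) :
    ∃ (lam : ℚ_[p]ˣ) (x : ℚ_[p]) (y : ℚ_[p]ˣ) (k : Matrix (Fin 2) (Fin 2) ℚ_[p]),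
      (∀ i j, ‖k i j‖ ≤ 1) ∧ ‖k.det‖ = 1 ∧
      !![(t : ℚ_[p]), (u : ℚ_[p]); (v : ℚ_[p]), (w : ℚ_[p])] * !![(p : ℚ_[p]) ^ m, 0; 0, 1] =
        (lam : ℚ_[p]) • (!![1, x; 0, 1] * !![(y : ℚ_[p]), 0; 0, 1] * k) ∧
      min (if k 1 0 = 0 then (⊤ : WithTop ℤ) else (((k 1 0).valuation : ℤ) : WithTop ℤ))
          (((2 * m : ℕ) : ℤ) : WithTop ℤ) = ((l : ℤ) : WithTop ℤ) ∧
      (y : ℚ_[p]).valuation = t₀ + 2 * (l : ℤ) := by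
  have hvw := isUnit_or_isUnit_of_isUnit_det hdet
  have hnorm := norm_det_mul_pow_eq_zpow m hdet
  have hdet0 := norm_ne_zero_iff.1 (hnorm ▸ zpow_ne_zero _ (NeZero.ne (p : ℝ)))
  obtain ⟨lam, x, y, k, h, hlam⟩ := exists_isIwasawaDecomposition hdet0
  have hlam_val : (lam : ℚ_[p]).valuation = truncVal m w :=
    valuation_eq_of_norm_eq_zpow_neg (hlam.trans (max_norm_mul_pow_eq_zpow_truncVal m hvw))
  have hdet_val : (m : ℤ) = 2 * (lam : ℚ_[p]).valuation + (y : ℚ_[p]).valuation := by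
    rw [← h.valuation_det, Matrix.det_fin_two_of, valuation_eq_of_norm_eq_zpow_neg hnorm]
  rw [ite_isUnit_eq_add_truncVal_sub_truncVal m hvw] at hl
  refine ⟨lam, x, y, k, h.norm_apply_le_one, h.norm_det_eq_one, ?_, ?_, ?_⟩
  · rw [← h.eq_smul]
    simp
  · rw [hl]
    exact min_valuation_eq_add_truncVal_sub_truncVal m hvw lam.ne_zero hlam_val h.apply_one_zero
  · have hle := truncVal_le m w
    rw [← truncVal] at ht₀
    omega

/-- Explicit Iwasawa decomposition of `g·a(p^{2n})` for `g = [[t,u],[v,w]] ∈ GL₂(ℤ_p)`,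
with the invariants `l` and `t₀` computed in terms of the valuations of `v` and `w`. -/
theorem stmt_13 (p : ℕ) [Fact p.Prime] (n : ℕ) (hn : 1 ≤ n)
    (t u v w : ℤ_[p]) (hdet : IsUnit (Matrix.det !![t, u; v, w]))
    (l : ℕ)
    (hl : l = if IsUnit w
      then (min (((2 * n : ℕ) : ℕ∞) + padicValE p v) ((4 * n : ℕ) : ℕ∞)).toNat
      else ((((2 * n : ℕ) : ℕ∞)) - padicValE p w).toNat)
    (t₀ : ℤ)
    (ht₀ : t₀ = -(2 * (n : ℤ)) - 2 * ((min (((2 * n : ℕ) : ℕ∞)) (padicValE p v)).toNat : ℤ)) :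
    ∃ (lam : ℚ_[p]ˣ) (x : ℚ_[p]) (y : ℚ_[p]ˣ) (k : Matrix (Fin 2) (Fin 2) ℚ_[p]),
      (∀ i j, ‖k i j‖ ≤ 1) ∧ ‖k.det‖ = 1 ∧
      !![(t : ℚ_[p]), (u : ℚ_[p]); (v : ℚ_[p]), (w : ℚ_[p])] * !![(p : ℚ_[p]) ^ (2 * n), 0; 0, 1] =
        (lam : ℚ_[p]) • (!![1, x; 0, 1] * !![(y : ℚ_[p]), 0; 0, 1] * k) ∧
      min (if k 1 0 = 0 then (⊤ : WithTop ℤ) else (((k 1 0).valuation : ℤ) : WithTop ℤ))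
          (((4 * n : ℕ) : ℤ) : WithTop ℤ) = ((l : ℤ) : WithTop ℤ) ∧
      (y : ℚ_[p]).valuation = t₀ + 2 * (l : ℤ) := by
  rw [show 4 * n = 2 * (2 * n) by ring] at hl ⊢
  exact stmt_13_general p (2 * n) t u v w hdet l hl t₀ (mod_cast ht₀)
end

section
/- There exists an absolute constant Cst > 0 with the following property. Let b₁, b₂ be a basis of ℝ², let Λ = ℤb₁ + ℤb₂, and let V = |det(b₁, b₂)| be the covolume of Λ. Call v ∈ Λ primitive if v is not of the form k·w with k ≥ 2 an integer and w ∈ Λ. Then for every R > 0, the number of primitive points v ∈ Λ with Euclidean norm ‖v‖ ≤ R is at most Cst·(1 + R²/V). -/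
/-!
Two lattice points `v, w` span a parallelogram whose area is an integer multiple of `V`, and it is
also at most `‖v‖ ‖w‖` times the difference of their polar angles. Primitive points with vanishing
area agree up to sign, and opposite points have polar angles at distance `π`. Hence the polar angles
of the primitive points of norm at most `R` are `(1 + R² / V)⁻¹`-separated in `(-π, π]`, which
leaves room for only `O(1 + R² / V)` of them.
-/

open Module Submodule
open scoped EuclideanSpace

theorem finite_and_ncard_le_of_pairwise_le_abs_sub {α : Type*} {S : Set α} {f : α → ℝ}
    {a b ε : ℝ} (hab : a ≤ b) (hε : 0 < ε) (hf : ∀ x ∈ S, f x ∈ Set.Icc a b)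
    (hS : S.Pairwise fun x y ↦ ε ≤ |f y - f x|) :
    S.Finite ∧ (S.ncard : ℝ) ≤ (b - a) / ε + 1 := by
  let cell (x : α) : ℕ := ⌊(f x - a) / ε⌋₊
  let cells : Finset ℕ := Finset.range (⌊(b - a) / ε⌋₊ + 1)
  have cell_mem : ∀ x ∈ S, cell x ∈ (cells : Set ℕ) := by
    intro x hx
    have hxb := (hf x hx).2
    simp only [cells, cell, Finset.mem_coe, Finset.mem_range, Nat.lt_succ_iff]
    gcongr
  have cell_injOn : S.InjOn cell := by
    intro x hx y hy hxy
    by_contra hne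
    have hfloor : ⌊(f x - a) / ε⌋ = ⌊(f y - a) / ε⌋ := by
      rw [← Int.natCast_floor_eq_floor (div_nonneg (sub_nonneg.2 (hf x hx).1) hε.le),
        ← Int.natCast_floor_eq_floor (div_nonneg (sub_nonneg.2 (hf y hy).1) hε.le)]
      exact congrArg Nat.cast hxy
    have hlt := Int.abs_sub_lt_one_of_floor_eq_floor hfloor.symm
    rw [← sub_div, sub_sub_sub_cancel_right, abs_div, abs_of_pos hε, div_lt_one hε] at hlt
    exact hlt.not_ge (hS hx hy hne)
  refine ⟨.of_injOn cell_mem cell_injOn cells.finite_toSet, ?_⟩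
  calc (S.ncard : ℝ) ≤ (cells : Set ℕ).ncard := by
        exact_mod_cast Set.ncard_le_ncard_of_injOn cell cell_mem cell_injOn cells.finite_toSet
    _ = ⌊(b - a) / ε⌋₊ + 1 := by simp [cells]
    _ ≤ (b - a) / ε + 1 := by
        gcongr
        exact Nat.floor_le (div_nonneg (sub_nonneg.2 hab) hε.le)

section Angle

variable {E : Type*} [NormedAddCommGroup E] [InnerProductSpace ℝ E] [Fact (finrank ℝ E = 2)]
  (o : Orientation ℝ E (Fin 2)) {e v w : E}

theorem areaForm_eq_norm_mul_norm_mul_sin_oangle (v w : E) :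
    o.areaForm v w = ‖v‖ * ‖w‖ * (o.oangle v w).sin := by
  rw [Orientation.oangle, Real.Angle.sin_coe, ← o.norm_kahler, Complex.norm_mul_sin_arg,
    o.kahler_apply_apply]
  simp

theorem areaForm_ne_zero_of_linearIndependent (h : LinearIndependent ℝ ![v, w]) :
    o.areaForm v w ≠ 0 := by
  have hsin : (o.oangle v w).sin ≠ 0 := by
    rwa [Ne, Real.Angle.sin_eq_zero_iff, o.oangle_eq_zero_or_eq_pi_iff_not_linearIndependent,
      not_not]
  have hv : v ≠ 0 := h.ne_zero 0
  have hw : w ≠ 0 := h.ne_zero 1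
  rw [areaForm_eq_norm_mul_norm_mul_sin_oangle]
  exact mul_ne_zero (mul_ne_zero (norm_ne_zero_iff.2 hv) (norm_ne_zero_iff.2 hw)) hsin

theorem coe_toReal_oangle_sub_toReal_oangle (he : e ≠ 0) (hv : v ≠ 0) (hw : w ≠ 0) :
    (((o.oangle e w).toReal - (o.oangle e v).toReal : ℝ) : Real.Angle) = o.oangle v w := by
  rw [Real.Angle.coe_sub, Real.Angle.coe_toReal, Real.Angle.coe_toReal,
    o.oangle_sub_left he hv hw]

theorem abs_areaForm_le_norm_mul_norm_mul_abs_sub_toReal_oangle (he : e ≠ 0) (v w : E) :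
    |o.areaForm v w| ≤ ‖v‖ * ‖w‖ * |(o.oangle e w).toReal - (o.oangle e v).toReal| := by
  rcases eq_or_ne v 0 with rfl | hv
  · simp
  rcases eq_or_ne w 0 with rfl | hw
  · simp
  rw [areaForm_eq_norm_mul_norm_mul_sin_oangle, ← coe_toReal_oangle_sub_toReal_oangle o he hv hw,
    Real.Angle.sin_coe, abs_mul, abs_of_nonneg (by positivity)]
  exact mul_le_mul_of_nonneg_left Real.abs_sin_le_abs (by positivity)

theorem pi_le_abs_toReal_oangle_neg_sub (he : e ≠ 0) (hv : v ≠ 0) :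
    Real.pi ≤ |(o.oangle e (-v)).toReal - (o.oangle e v).toReal| := by
  have hπ := coe_toReal_oangle_sub_toReal_oangle o he hv (neg_ne_zero.2 hv)
  rw [o.oangle_neg_self_right hv] at hπ
  by_contra! hlt
  have hself := Real.Angle.toReal_coe_eq_self_iff.2 ⟨(abs_lt.1 hlt).1, (abs_lt.1 hlt).2.le⟩
  rw [hπ, Real.Angle.toReal_pi] at hself
  rw [← hself, abs_of_pos Real.pi_pos] at hlt
  exact hlt.false

theorem inv_le_abs_sub_toReal_oangle {R V : ℝ} (he : e ≠ 0) (hV : 0 < V) (hv : ‖v‖ ≤ R)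
    (hw : ‖w‖ ≤ R) (hne : v ≠ w) (harea : w = -v ∨ V ≤ |o.areaForm v w|) :
    (1 + R ^ 2 / V)⁻¹ ≤ |(o.oangle e w).toReal - (o.oangle e v).toReal| := by
  have hT : 0 ≤ R ^ 2 / V := by positivity
  rcases harea with rfl | harea
  · have hv0 : v ≠ 0 := by
      rintro rfl
      simp at hne
    calc (1 + R ^ 2 / V)⁻¹ ≤ 1 := inv_le_one_of_one_le₀ (by linarith)
      _ ≤ Real.pi := by linarith [Real.pi_gt_three]
      _ ≤ _ := pi_le_abs_toReal_oangle_neg_sub o he hv0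
  · set δ := |(o.oangle e w).toReal - (o.oangle e v).toReal|
    have hR : 0 ≤ R := (norm_nonneg v).trans hv
    have hVδ : V ≤ R ^ 2 * δ := calc
      V ≤ ‖v‖ * ‖w‖ * δ :=
        harea.trans (abs_areaForm_le_norm_mul_norm_mul_abs_sub_toReal_oangle o he v w)
      _ ≤ R * R * δ := by gcongr
      _ = R ^ 2 * δ := by ring
    rw [inv_le_iff_one_le_mul₀' (by positivity)]
    calc 1 ≤ R ^ 2 / V * δ := by rwa [div_mul_eq_mul_div, one_le_div hV]
      _ ≤ (1 + R ^ 2 / V) * δ := by gcongr; linarith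

theorem finite_and_ncard_le_of_pairwise_le_abs_areaForm {S : Set E} {R V : ℝ} (hV : 0 < V)
    (hR : ∀ v ∈ S, ‖v‖ ≤ R) (hS : S.Pairwise fun v w ↦ w = -v ∨ V ≤ |o.areaForm v w|) :
    S.Finite ∧ (S.ncard : ℝ) ≤ 8 * (1 + R ^ 2 / V) := by
  have : Nontrivial E := nontrivial_of_finrank_eq_succ (Fact.out : finrank ℝ E = 2)
  obtain ⟨e, he⟩ := exists_ne (0 : E)
  have hT : 0 ≤ R ^ 2 / V := by positivity
  obtain ⟨hfin, hcard⟩ := finite_and_ncard_le_of_pairwise_le_abs_sub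
    (f := fun v ↦ (o.oangle e v).toReal) (neg_le_self Real.pi_pos.le)
    (inv_pos.2 (by linarith : 0 < 1 + R ^ 2 / V))
    (fun v _ ↦ Set.Ioc_subset_Icc_self (Real.Angle.toReal_mem_Ioc _))
    (fun v hv w hw hne ↦
      inv_le_abs_sub_toReal_oangle o he hV (hR v hv) (hR w hw) hne (hS hv hw hne))
  refine ⟨hfin, hcard.trans ?_⟩
  calc (Real.pi - -Real.pi) / (1 + R ^ 2 / V)⁻¹ + 1
      = 2 * Real.pi * (1 + R ^ 2 / V) + 1 := by rw [div_inv_eq_mul]; ring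
    _ ≤ 7 * (1 + R ^ 2 / V) + 1 := by
        gcongr
        linarith [Real.pi_lt_d2]
    _ ≤ 8 * (1 + R ^ 2 / V) := by linarith

end Angle

section Primitive

theorem exists_unit_of_isCoprime_of_mul_eq_mul {R : Type*} [CommRing R] {m n p q : R}
    (hmn : IsCoprime m n) (hpq : IsCoprime p q) (h : m * q = p * n) :
    ∃ u : Rˣ, p = u * m ∧ q = u * n := by
  obtain ⟨a, b, hab⟩ := hmn
  obtain ⟨c, d, hcd⟩ := hpq
  have hp : p = (a * p + b * q) * m := by linear_combination -p * hab - b * h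
  have hq : q = (a * p + b * q) * n := by linear_combination -q * hab + a * h
  have hunit : IsUnit (a * p + b * q) :=
    .of_mul_eq_one (c * m + d * n) (by linear_combination hcd - c * hp - d * hq)
  exact ⟨hunit.unit, hp, hq⟩

variable {M : Type*} [AddCommGroup M]

/-- Primitivity of a lattice vector: `v` is not `k • w` with `k ≥ 2` and `w ∈ Λ`. Membership of `v`
in `Λ` is not part of the predicate, and `0 = 2 • 0` is never primitive. -/
def IsPrimitiveIn (Λ : Submodule ℤ M) (v : M) : Prop :=
  ¬∃ (k : ℤ) (w : M), 2 ≤ k ∧ w ∈ Λ ∧ v = k • w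

theorem IsPrimitiveIn.isCoprime {x y : M} {m n : ℤ}
    (h : IsPrimitiveIn (span ℤ {x, y}) (m • x + n • y)) : IsCoprime m n := by
  rw [Int.isCoprime_iff_gcd_eq_one]
  by_contra hgcd
  apply h
  by_cases hzero : Int.gcd m n = 0
  · obtain ⟨rfl, rfl⟩ := Int.gcd_eq_zero_iff.1 hzero
    exact ⟨2, 0, le_rfl, zero_mem _, by simp⟩
  · obtain ⟨p, hp⟩ := Int.gcd_dvd_left m n
    obtain ⟨q, hq⟩ := Int.gcd_dvd_right m n
    refine ⟨Int.gcd m n, p • x + q • y, by lia, mem_span_pair.2 ⟨p, q, rfl⟩, ?_⟩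
    rw [smul_add, smul_smul, smul_smul, ← hp, ← hq]

variable {R : Type*} [CommRing R] [Module R M] {ω : M →ₗ[R] M →ₗ[R] R}

theorem isAlt_apply_zsmul_add_zsmul (hω : ω.IsAlt) (x y : M) (m n p q : ℤ) :
    ω (m • x + n • y) (p • x + q • y) = (m * q - p * n : ℤ) * ω x y := by
  simp only [map_add, map_zsmul, LinearMap.add_apply, LinearMap.smul_apply, hω.self_eq_zero,
    ← hω.neg x y, zsmul_eq_mul]
  push_cast
  ring

theorem IsPrimitiveIn.eq_neg_or_le_abs_of_isAlt [LinearOrder R] [IsStrictOrderedRing R]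
    (hω : ω.IsAlt) {x y v w : M} (hv : v ∈ span ℤ {x, y}) (hw : w ∈ span ℤ {x, y})
    (hv' : IsPrimitiveIn (span ℤ {x, y}) v) (hw' : IsPrimitiveIn (span ℤ {x, y}) w)
    (hne : v ≠ w) : w = -v ∨ |ω x y| ≤ |ω v w| := by
  obtain ⟨m, n, rfl⟩ := mem_span_pair.1 hv
  obtain ⟨p, q, rfl⟩ := mem_span_pair.1 hw
  rcases eq_or_ne (m * q - p * n) 0 with hdet | hdet
  · left
    obtain ⟨u, rfl, rfl⟩ :=
      exists_unit_of_isCoprime_of_mul_eq_mul hv'.isCoprime hw'.isCoprime (sub_eq_zero.1 hdet)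
    rcases Int.units_eq_one_or u with rfl | rfl
    · simp at hne
    · simp [add_comm]
  · right
    have hone : (1 : R) ≤ |((m * q - p * n : ℤ) : R)| := by
      exact_mod_cast Int.one_le_abs hdet
    rw [isAlt_apply_zsmul_add_zsmul hω, abs_mul]
    exact le_mul_of_one_le_left (abs_nonneg _) hone

end Primitive

theorem stmt_14_general {E : Type*} [NormedAddCommGroup E] [InnerProductSpace ℝ E]
    [Fact (finrank ℝ E = 2)] (o : Orientation ℝ E (Fin 2)) {b₁ b₂ : E}
    (hb : LinearIndependent ℝ ![b₁, b₂]) (R : ℝ) :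
    {v | v ∈ span ℤ {b₁, b₂} ∧ IsPrimitiveIn (span ℤ {b₁, b₂}) v ∧ ‖v‖ ≤ R}.Finite ∧
      ({v | v ∈ span ℤ {b₁, b₂} ∧ IsPrimitiveIn (span ℤ {b₁, b₂}) v ∧ ‖v‖ ≤ R}.ncard : ℝ) ≤
        8 * (1 + R ^ 2 / |o.areaForm b₁ b₂|) :=
  finite_and_ncard_le_of_pairwise_le_abs_areaForm o
    (abs_pos.2 (areaForm_ne_zero_of_linearIndependent o hb)) (fun _ hv ↦ hv.2.2)
    fun _ hv _ hw ↦
      IsPrimitiveIn.eq_neg_or_le_abs_of_isAlt o.areaForm_apply_self hv.1 hw.1 hv.2.1 hw.2.1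

theorem areaForm_basisFun_orientation (v w : EuclideanSpace ℝ (Fin 2)) :
    (EuclideanSpace.basisFun (Fin 2) ℝ).toBasis.orientation.areaForm v w =
      Matrix.det !![v 0, w 0; v 1, w 1] := by
  rw [Orientation.areaForm_to_volumeForm, Orientation.volumeForm_robust _ _ rfl, Basis.det_apply,
    Matrix.det_fin_two, Matrix.det_fin_two_of]
  simp [Basis.toMatrix_apply]

/-- Counting primitive lattice points: there is an absolute constant `Cst` such that for any
rank-two lattice `Λ = ℤb₁ + ℤb₂` in `ℝ²` of covolume `V`, the number of primitive points of
`Λ` of norm at most `R` is at most `Cst·(1 + R²/V)`. -/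
theorem stmt_14 :
    ∃ Cst : ℝ, 0 < Cst ∧
      ∀ b₁ b₂ : EuclideanSpace ℝ (Fin 2), LinearIndependent ℝ ![b₁, b₂] →
      ∀ Λ : Set (EuclideanSpace ℝ (Fin 2)),
        Λ = {v | ∃ m n : ℤ, v = m • b₁ + n • b₂} →
      ∀ V : ℝ, V = |Matrix.det !![b₁ 0, b₂ 0; b₁ 1, b₂ 1]| →
      ∀ R : ℝ, 0 < R →
        {v | v ∈ Λ ∧ (¬∃ (k : ℤ) (w : EuclideanSpace ℝ (Fin 2)), 2 ≤ k ∧ w ∈ Λ ∧ v = k • w) ∧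
            ‖v‖ ≤ R}.Finite ∧
        (({v | v ∈ Λ ∧ (¬∃ (k : ℤ) (w : EuclideanSpace ℝ (Fin 2)), 2 ≤ k ∧ w ∈ Λ ∧ v = k • w) ∧
            ‖v‖ ≤ R}.ncard : ℝ)) ≤ Cst * (1 + R ^ 2 / V) := by
  refine ⟨8, by norm_num, ?_⟩
  rintro b₁ b₂ hb Λ hΛ V rfl R -
  obtain rfl : Λ = span ℤ {b₁, b₂} := by
    ext v
    simp only [hΛ, Set.mem_ofPred_eq, SetLike.mem_coe, mem_span_pair, eq_comm]
  rw [← areaForm_basisFun_orientation]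
  exact stmt_14_general _ hb R
end
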